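/- Let Ω ⊂ ℝ² be a compact convex set of positive measure, let l ⊂ ℝ² be a straight line through the origin, let v_l be a unit vector orthogonal to l, and let H = {a_k}_{k∈ℤ} ⊂ ℝ be a uniformly discrete set. Then the union of parallel lines P = ⋃_{k∈ℤ} (l + a_k v_l) is a sampling set for B_Ω if and only if D⁻(H)·v_l ∉ Ω − Ω. -/

import Mathlib

open MeasureTheory FourierTransform Filter Metric
open scoped Pointwise RealInnerProductSpace ENNReal NNReal

noncomputable section

variable {V : Type*} [NormedAddCommGroup V] [InnerProductSpace ℝ V]
  [FiniteDimensional ℝ V] [MeasurableSpace V] [BorelSpace V]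

/-- `f` belongs to the Bernstein space `B_Ω`: it is a continuous bounded function which is the
inverse Fourier transform of a tempered distribution supported in `Ω`, i.e. its distributional
Fourier transform annihilates every test function whose support is disjoint from `Ω`. -/
def MemBernstein (Ω : Set V) (f : V → ℂ) : Prop :=
  Continuous f ∧ (∃ C, ∀ x, ‖f x‖ ≤ C) ∧
    ∀ ψ : V → ℂ, ContDiff ℝ (⊤ : ℕ∞) ψ → HasCompactSupport ψ → tsupport ψ ∩ Ω = ∅ →
      ∫ x, f x * 𝓕 ψ x = 0

/-- `P` is a sampling set for the Bernstein space `B_Ω`: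
`‖f‖_∞ ≤ C · sup_{x ∈ P} ‖f x‖` for all `f ∈ B_Ω`. -/
def IsSamplingSet (Ω P : Set V) : Prop :=
  ∃ C > 0, ∀ f : V → ℂ, MemBernstein Ω f →
    ∀ x : V, ‖f x‖ ≤ C * sSup ((fun p => ‖f p‖) '' P)

/-- A set is uniformly discrete if distinct points are separated by a fixed positive distance. -/
def UniformlyDiscrete {X : Type*} [PseudoMetricSpace X] (Λ : Set X) : Prop :=
  ∃ δ > 0, ∀ x ∈ Λ, ∀ y ∈ Λ, x ≠ y → δ ≤ dist x y

/-- The lower uniform (Beurling) density of a set: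
`D⁻(Λ) = lim_{r→∞} inf_x #(Λ ∩ B_r(x)) / |B_r(x)|`. -/
def lowerUniformDensity {X : Type*} [NormedAddCommGroup X] [MeasureSpace X] (Λ : Set X) : ℝ :=
  liminf (fun r : ℝ => ⨅ x : X,
    (Nat.card ↥(Λ ∩ closedBall x r) : ℝ) / (volume (closedBall x r)).toReal) atTop

/-!
Multiplying `f` by a Schwartz kernel with spectrum in a small ball makes it integrable and enlarges
`Ω` only slightly. The Fourier transform along the hyperplanes orthogonal to `v` then turns `f` into
functions of the single variable `⟪x, v⟫`, whose spectra lie in chords of the enlarged `Ω` in the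
direction `v`. If `D⁻(H) • v ∉ Ω - Ω`, compactness and convexity make all these chords shorter than
some `L < D⁻(H)`, and Beurling's one-dimensional theorem bounds each function by its values on `H`:
by Jensen's formula, a function of small exponential type cannot have too many zeros, even
approximate ones. Integrating over the bounded set of tangential frequencies recovers `f`.

Conversely, if `D⁻(H) • v ∈ Ω - Ω`, then `Ω` contains a segment of direction `v` and length at least
`D⁻(H)`, so `H` is a sampling set for the corresponding interval and, by stability, for a slightly
longer one. On an interval with few points of `H`, linear algebra provides a nonzero
combination of translates of a sinc-like kernel that vanishes at those points and is small at the
others, which contradicts sampling.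
-/

section Fourier

lemma contDiff_fourierChar : ContDiff ℝ (⊤ : ℕ∞) (𝐞 · : ℝ → ℂ) := by
  simp only [Real.fourierChar_apply]
  exact ((Complex.ofRealCLM.contDiff.comp (contDiff_const.mul contDiff_id)).mul
    contDiff_const).cexp

lemma continuous_fourier_of_integrable {f : V → ℂ} (hf : Integrable f) : Continuous (𝓕 f) :=
  VectorFourier.fourierIntegral_continuous Real.continuous_fourierChar continuous_inner hf

lemma continuous_fourierInv_of_integrable {f : V → ℂ} (hf : Integrable f) :
    Continuous (𝓕⁻ f) := by
  rw [Real.fourierInv_eq_fourier_comp_neg]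
  exact continuous_fourier_of_integrable hf.comp_neg

lemma norm_fourier_le_integral_norm (f : V → ℂ) (ξ : V) : ‖𝓕 f ξ‖ ≤ ∫ x, ‖f x‖ :=
  VectorFourier.norm_fourierIntegral_le_integral_norm _ _ _ _ _

lemma norm_fourierInv_le_integral_norm (f : V → ℂ) (x : V) : ‖𝓕⁻ f x‖ ≤ ∫ ξ, ‖f ξ‖ := by
  rw [Real.fourierInv_eq_fourier_neg]
  exact norm_fourier_le_integral_norm f (-x)

lemma integral_fourier_mul_eq {f g : V → ℂ} (hf : Integrable f) (hg : Integrable g) :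
    ∫ x, 𝓕 f x * g x = ∫ x, f x * 𝓕 g x := by
  have h := VectorFourier.integral_fourierIntegral_smul_eq_flip (L := innerₗ V)
    Real.continuous_fourierChar continuous_inner hf hg
  rwa [flip_innerₗ] at h

lemma integral_fourierInv_mul_eq {f g : V → ℂ} (hf : Integrable f) (hg : Integrable g) :
    ∫ x, 𝓕⁻ f x * g x = ∫ x, f x * 𝓕⁻ g x := by
  simp only [Real.fourierInv_eq_fourier_comp_neg f, Real.fourierInv_eq_fourier_neg g]
  rw [integral_fourier_mul_eq hf.comp_neg hg, ← integral_neg_eq_self]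
  simp only [neg_neg]

lemma integrable_fourier_of_contDiff {ψ : V → ℂ} (hψ : ContDiff ℝ (⊤ : ℕ∞) ψ)
    (hψc : HasCompactSupport ψ) : Integrable (𝓕 ψ) :=
  (𝓕 (hψc.toSchwartzMap hψ)).integrable

lemma fourierInv_fourier_of_contDiff {ψ : V → ℂ} (hψ : ContDiff ℝ (⊤ : ℕ∞) ψ)
    (hψc : HasCompactSupport ψ) : 𝓕⁻ (𝓕 ψ) = ψ :=
  hψ.continuous.fourierInv_fourier_eq (hψ.continuous.integrable_of_hasCompactSupport hψc)
    (integrable_fourier_of_contDiff hψ hψc)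

lemma fourier_comp_add_right (f : V → ℂ) (c ξ : V) :
    𝓕 (fun x => f (x + c)) ξ = 𝐞 ⟪c, ξ⟫ • 𝓕 f ξ :=
  congrFun (VectorFourier.fourierIntegral_comp_add_right Real.fourierChar volume (innerₗ V) f c) ξ

lemma fourier_fourierChar_smul (f : V → ℂ) (c ξ : V) :
    𝓕 (fun x => 𝐞 ⟪x, c⟫ • f x) ξ = 𝓕 f (ξ - c) := by
  simp only [Real.fourier_eq, smul_smul, ← AddChar.map_add_eq_mul, inner_sub_right, neg_sub]
  simp only [sub_eq_neg_add]

lemma fourier_comp_smul {r : ℝ} (hr : r ≠ 0) (f : V → ℂ) (ξ : V) :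
    𝓕 (fun x => f (r • x)) ξ = |(r ^ Module.finrank ℝ V)⁻¹| * 𝓕 f (r⁻¹ • ξ) := by
  have h := Measure.integral_comp_smul volume
    (fun x => Real.fourierChar (-⟪x, r⁻¹ • ξ⟫) • f x) r
  rw [Real.fourier_eq, Real.fourier_eq, ← Complex.real_smul, ← h]
  simp only [inner_smul_left, inner_smul_right, RCLike.conj_to_real, inv_mul_cancel_left₀ hr]

end Fourier

section BernsteinSpace

variable {Ω Ω' : Set V} {f : V → ℂ}

/-- The Bernstein space `B_Ω` as a complex subspace of the space of all functions. -/
def bernsteinSpace (Ω : Set V) : Submodule ℂ (V → ℂ) where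
  carrier := {f | MemBernstein Ω f}
  zero_mem' := ⟨continuous_const, ⟨0, by simp⟩, by simp⟩
  add_mem' := by
    rintro f g ⟨hf, ⟨C, hC⟩, hfΩ⟩ ⟨hg, ⟨D, hD⟩, hgΩ⟩
    refine ⟨hf.add hg, ⟨C + D, fun x => norm_add_le_of_le (hC x) (hD x)⟩, fun ψ hψ hc hs => ?_⟩
    have hi := integrable_fourier_of_contDiff hψ hc
    simp only [Pi.add_apply, add_mul]
    rw [integral_add (hi.bdd_mul hf.aestronglyMeasurable (ae_of_all _ hC))
      (hi.bdd_mul hg.aestronglyMeasurable (ae_of_all _ hD)), hfΩ ψ hψ hc hs, hgΩ ψ hψ hc hs,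
      add_zero]
  smul_mem' := by
    rintro c f ⟨hf, ⟨C, hC⟩, hfΩ⟩
    refine ⟨hf.const_smul c, ⟨‖c‖ * C, fun x => ?_⟩, fun ψ hψ hc hs => ?_⟩
    · exact (norm_smul_le c (f x)).trans (by gcongr; exact hC x)
    · simp only [Pi.smul_apply, smul_mul_assoc]
      rw [integral_smul, hfΩ ψ hψ hc hs, smul_zero]

lemma mem_bernsteinSpace : f ∈ bernsteinSpace Ω ↔ MemBernstein Ω f := Iff.rfl

lemma MemBernstein.mono (hf : MemBernstein Ω f) (h : Ω ⊆ Ω') : MemBernstein Ω' f :=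
  ⟨hf.1, hf.2.1, fun ψ hψ hc hs => hf.2.2 ψ hψ hc
    (Set.subset_empty_iff.mp ((Set.inter_subset_inter_right _ h).trans hs.subset))⟩

lemma MemBernstein.sum {ι : Type*} {s : Finset ι} {F : ι → V → ℂ}
    (hF : ∀ i ∈ s, MemBernstein Ω (F i)) : MemBernstein Ω fun x => ∑ i ∈ s, F i x := by
  simpa only [← Finset.sum_fn] using mem_bernsteinSpace.mp (Submodule.sum_mem _ hF)

lemma MemBernstein.const_mul (hf : MemBernstein Ω f) (c : ℂ) :
    MemBernstein Ω fun x => c * f x :=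
  (bernsteinSpace Ω).smul_mem c hf

lemma MemBernstein.comp_add_right (hf : MemBernstein Ω f) (p : V) :
    MemBernstein Ω fun x => f (x + p) := by
  obtain ⟨hcont, ⟨C, hC⟩, hfΩ⟩ := hf
  refine ⟨by fun_prop, ⟨C, fun x => hC _⟩, fun ψ hψ hc hs => ?_⟩
  let θ : V → ℂ := fun y => 𝐞 ⟪y, p⟫ • ψ y
  have hθ : ContDiff ℝ (⊤ : ℕ∞) θ :=
    (contDiff_fourierChar.comp (contDiff_id.inner ℝ contDiff_const)).smul hψ
  have hθψ : tsupport θ ⊆ tsupport ψ := closure_mono (Function.support_mul_subset_right _ _)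
  calc ∫ x, f (x + p) * 𝓕 ψ x = ∫ x, f (x + p) * 𝓕 θ (x + p) := by
        simp only [θ, fourier_fourierChar_smul, add_sub_cancel_right]
    _ = ∫ x, f x * 𝓕 θ x := integral_add_right_eq_self (fun x => f x * 𝓕 θ x) p
    _ = 0 := hfΩ θ hθ hc.mul_left (Set.subset_empty_iff.mp
        ((Set.inter_subset_inter_left _ hθψ).trans hs.subset))

lemma MemBernstein.fourierChar_smul (hf : MemBernstein Ω f) (c : V) :
    MemBernstein (c +ᵥ Ω) fun x => 𝐞 ⟪c, x⟫ • f x := by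
  obtain ⟨hcont, ⟨C, hC⟩, hfΩ⟩ := hf
  refine ⟨by fun_prop, ⟨C, fun x => (Circle.norm_smul _ _).trans_le (hC x)⟩,
    fun ψ hψ hc hs => ?_⟩
  calc ∫ x, (𝐞 ⟪c, x⟫ • f x) * 𝓕 ψ x
      = ∫ x, f x * 𝓕 (fun y => ψ (y + c)) x := by
        simp only [fourier_comp_add_right, smul_mul_assoc, mul_smul_comm]
    _ = 0 := by
        refine hfΩ _ (hψ.comp (contDiff_id.add contDiff_const))
          (hc.comp_homeomorph (Homeomorph.addRight c)) ?_
        rw [Set.eq_empty_iff_forall_notMem] at hs ⊢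
        rintro x ⟨hx, hxΩ⟩
        have hx' : x + c ∈ tsupport ψ :=
          (tsupport_comp_subset_preimage ψ (continuous_add_const c)) hx
        exact hs (x + c) ⟨hx', x, hxΩ, add_comm c x⟩

lemma MemBernstein.comp_smul (hf : MemBernstein Ω f) {r : ℝ} (hr : r ≠ 0) :
    MemBernstein (r • Ω) fun x => f (r • x) := by
  obtain ⟨hcont, ⟨C, hC⟩, hfΩ⟩ := hf
  refine ⟨by fun_prop, ⟨C, fun x => hC _⟩, fun ψ hψ hc hs => ?_⟩
  have hd := Measure.integral_comp_smul volume (fun x => f x * 𝓕 ψ (r⁻¹ • x)) r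
  simp only [inv_smul_smul₀ hr] at hd
  calc ∫ x, f (r • x) * 𝓕 ψ x
      = ∫ x, f x * 𝓕 (fun y => ψ (r • y)) x := by
        rw [hd, ← integral_smul]
        simp only [fourier_comp_smul hr, mul_left_comm, Complex.real_smul]
    _ = 0 := by
        refine hfΩ _ (hψ.comp (contDiff_id.const_smul r))
          (hc.comp_homeomorph (Homeomorph.smulOfNeZero r hr)) ?_
        rw [Set.eq_empty_iff_forall_notMem] at hs ⊢
        rintro x ⟨hx, hxΩ⟩
        have hx' : r • x ∈ tsupport ψ :=
          (tsupport_comp_subset_preimage ψ (continuous_const_smul r)) hx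
        exact hs (r • x) ⟨hx', Set.smul_mem_smul_set hxΩ⟩

lemma MemBernstein.fourier_eq_zero (hΩ : IsClosed Ω) (hf : MemBernstein Ω f)
    (hi : Integrable f) {ξ : V} (hξ : ξ ∉ Ω) : 𝓕 f ξ = 0 := by
  have hcont := continuous_fourier_of_integrable hi
  have hae : ∀ᵐ x, x ∈ Ωᶜ → 𝓕 f x = 0 := by
    refine hΩ.isOpen_compl.ae_eq_zero_of_integral_contDiff_smul_eq_zero
      (hcont.locallyIntegrable.locallyIntegrableOn _) fun φ hφ hc hs => ?_
    let ψ : V → ℂ := fun x => (φ x : ℂ)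
    have hψ : ContDiff ℝ (⊤ : ℕ∞) ψ := Complex.ofRealCLM.contDiff.comp hφ
    have hψc : HasCompactSupport ψ := hc.comp_left Complex.ofReal_zero
    have hψφ : tsupport ψ ⊆ tsupport φ :=
      closure_mono (Function.support_comp_subset Complex.ofReal_zero φ)
    calc ∫ x, φ x • 𝓕 f x = ∫ x, 𝓕 f x * ψ x := by simp only [ψ, Complex.real_smul, mul_comm]
      _ = ∫ x, f x * 𝓕 ψ x :=
        integral_fourier_mul_eq hi (hψ.continuous.integrable_of_hasCompactSupport hψc)
      _ = 0 := hf.2.2 ψ hψ hψc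
        (Set.disjoint_iff_inter_eq_empty.mp (Set.disjoint_left.mpr fun x hx => hs (hψφ hx)))
  exact Measure.eqOn_open_of_ae_eq ((ae_restrict_iff' hΩ.isOpen_compl.measurableSet).mpr hae)
    hΩ.isOpen_compl hcont.continuousOn continuousOn_const hξ

lemma integral_mul_eq_zero_of_disjoint {m ψ : V → ℂ} (hm : ∀ ξ ∉ Ω, m ξ = 0)
    (hs : tsupport ψ ∩ Ω = ∅) : ∫ ξ, m ξ * ψ ξ = 0 := by
  refine integral_eq_zero_of_ae (ae_of_all _ fun ξ => mul_eq_zero.mpr ?_)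
  by_cases hξ : ξ ∈ Ω
  · exact .inr (image_eq_zero_of_notMem_tsupport fun h => hs.subset ⟨h, hξ⟩)
  · exact .inl (hm ξ hξ)

lemma memBernstein_of_fourier_eq_zero (hcont : Continuous f) (hb : ∃ C, ∀ x, ‖f x‖ ≤ C)
    (hi : Integrable f) (hf : ∀ ξ ∉ Ω, 𝓕 f ξ = 0) : MemBernstein Ω f := by
  refine ⟨hcont, hb, fun ψ hψ hc hs => ?_⟩
  rw [← integral_fourier_mul_eq hi (hψ.continuous.integrable_of_hasCompactSupport hc),
    integral_mul_eq_zero_of_disjoint hf hs]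

lemma memBernstein_fourierInv {m : V → ℂ} (hm : Integrable m) (hmΩ : ∀ ξ ∉ Ω, m ξ = 0) :
    MemBernstein Ω (𝓕⁻ m) := by
  refine ⟨continuous_fourierInv_of_integrable hm, ⟨_, norm_fourierInv_le_integral_norm m⟩,
    fun ψ hψ hc hs => ?_⟩
  rw [integral_fourierInv_mul_eq hm (integrable_fourier_of_contDiff hψ hc),
    fourierInv_fourier_of_contDiff hψ hc, integral_mul_eq_zero_of_disjoint hmΩ hs]

end BernsteinSpace

section SamplingSet

variable {Ω P : Set V}

lemma isSamplingSet_iff :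
    IsSamplingSet Ω P ↔ ∃ C > 0, ∀ f, MemBernstein Ω f →
      ∀ b, 0 ≤ b → (∀ p ∈ P, ‖f p‖ ≤ b) → ∀ x, ‖f x‖ ≤ C * b := by
  refine exists_congr fun C => and_congr_right fun hC => forall₂_congr fun f hf => ⟨?_, ?_⟩
  · intro h b hb hP x
    refine (h x).trans (by gcongr; exact Real.sSup_le (by rwa [Set.forall_mem_image]) hb)
  · obtain ⟨M, hM⟩ := hf.2.1
    exact fun h => h _ (Real.sSup_nonneg (by simp)) fun p hp =>
      le_csSup ⟨M, by rintro _ ⟨x, -, rfl⟩; exact hM x⟩ ⟨p, hp, rfl⟩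

lemma isSamplingSet_of_exists_le_norm {ε : ℝ} (hε : 0 < ε)
    (h : ∀ x₀ f, MemBernstein Ω f → (∀ x, ‖f x‖ ≤ 1) → 1 / 2 ≤ ‖f 0‖ →
      ∃ p ∈ P, ε ≤ ‖f (p - x₀)‖) : IsSamplingSet Ω P := by
  refine isSamplingSet_iff.mpr ⟨ε⁻¹, inv_pos.mpr hε, fun f hf b hb hP x => ?_⟩
  obtain ⟨B, hB⟩ := hf.2.1
  have hfM : ∀ x, ‖f x‖ ≤ ⨆ x, ‖f x‖ := le_ciSup ⟨B, Set.forall_mem_range.mpr hB⟩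
  set M := ⨆ x, ‖f x‖ with hM
  refine (hfM x).trans ?_
  rcases ((norm_nonneg (f 0)).trans (hfM 0)).eq_or_lt with hM0 | hM0
  · rw [← hM0]; positivity
  obtain ⟨x₀, hx₀⟩ := exists_lt_of_lt_ciSup (hM ▸ half_lt_self hM0)
  have hnorm : ∀ x, ‖(M : ℂ)⁻¹ * f (x + x₀)‖ = ‖f (x + x₀)‖ / M := fun x => by
    simp [abs_of_pos hM0, div_eq_inv_mul]
  obtain ⟨p, hp, hpf⟩ := h x₀ _ ((hf.comp_add_right x₀).const_mul (M : ℂ)⁻¹)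
    (fun x => by rw [hnorm]; exact div_le_one_of_le₀ (hfM _) hM0.le)
    (by rw [hnorm, zero_add, le_div_iff₀ hM0]; linarith)
  rw [hnorm, sub_add_cancel, le_div_iff₀ hM0] at hpf
  exact (le_inv_mul_iff₀ hε).mpr (hpf.trans (hP p hp))

lemma IsSamplingSet.exists_norm_le_vadd (h : IsSamplingSet Ω P) :
    ∃ C > 0, ∀ (c : V) (f : V → ℂ), MemBernstein (c +ᵥ Ω) f →
      ∀ b, 0 ≤ b → (∀ p ∈ P, ‖f p‖ ≤ b) → ∀ x, ‖f x‖ ≤ C * b := by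
  obtain ⟨C, hC, hP⟩ := isSamplingSet_iff.mp h
  refine ⟨C, hC, fun c f hf b hb hfb x => ?_⟩
  have hf' := hf.fourierChar_smul (-c)
  rw [neg_vadd_vadd] at hf'
  simpa only [Circle.norm_smul] using hP _ hf' b hb (by simpa only [Circle.norm_smul]) x

end SamplingSet

section Kernel

open ContinuousLinearMap in
lemma MemBernstein.mul_fourier {Ω : Set V} {f η : V → ℂ} (hf : MemBernstein Ω f)
    (hη : Continuous η) (hηc : HasCompactSupport η) :
    MemBernstein (Ω - tsupport η) fun x => f x * 𝓕 η x := by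
  obtain ⟨hcont, ⟨C, hC⟩, hfΩ⟩ := hf
  have hηi : Integrable η := hη.integrable_of_hasCompactSupport hηc
  refine ⟨hcont.mul (continuous_fourier_of_integrable hηi), ⟨C * ∫ x, ‖η x‖, fun x => ?_⟩,
    fun ψ hψ hc hs => ?_⟩
  · exact norm_mul_le_of_le (hC x) (norm_fourier_le_integral_norm η x)
  have hψi : Integrable ψ := hψ.continuous.integrable_of_hasCompactSupport hc
  let θ : V → ℂ := convolution η ψ (mul ℝ ℂ) volume
  have hθs : tsupport θ ⊆ tsupport η + tsupport ψ :=
    closure_minimal ((support_convolution_subset _).trans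
      (Set.add_subset_add subset_closure subset_closure)) (hηc.isCompact.add hc.isCompact).isClosed
  have hθ : ∀ x, 𝓕 θ x = 𝓕 η x * 𝓕 ψ x := Real.fourier_mul_convolution_eq hηi hψi
  calc ∫ x, f x * 𝓕 η x * 𝓕 ψ x = ∫ x, f x * 𝓕 θ x := by simp only [hθ, mul_assoc]
    _ = 0 := by
        refine hfΩ θ (hc.contDiff_convolution_right _ hηi.locallyIntegrable hψ)
          (hηc.convolution _ hc) (Set.eq_empty_iff_forall_notMem.mpr ?_)
        rintro x ⟨hx, hxΩ⟩
        obtain ⟨y, hy, z, hz, rfl⟩ := hθs hx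
        exact hs.subset ⟨hz, y + z, hxΩ, y, hy, add_sub_cancel_left y z⟩

variable (V) in
lemma exists_localizing_kernel {ε : ℝ} (hε : 0 < ε) :
    ∃ k : SchwartzMap V ℂ, k 0 = 1 ∧ (∀ x, ‖k x‖ ≤ 1) ∧
      ∀ (Ω : Set V) (f : V → ℂ), MemBernstein Ω f →
        MemBernstein (Ω + closedBall 0 ε) fun x => f x * k x := by
  let b : ContDiffBump (0 : V) := ⟨ε / 2, ε, by positivity, by linarith⟩
  let η : V → ℂ := fun x => b.normed volume x
  have hη : ContDiff ℝ (⊤ : ℕ∞) η := Complex.ofRealCLM.contDiff.comp b.contDiff_normed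
  have hηc : HasCompactSupport η := b.hasCompactSupport_normed.comp_left Complex.ofReal_zero
  have hηs : tsupport η ⊆ closedBall 0 ε :=
    (closure_mono (Function.support_comp_subset Complex.ofReal_zero _)).trans
      b.tsupport_normed_eq.subset
  refine ⟨𝓕 (hηc.toSchwartzMap hη), ?_, fun x => ?_, fun Ω f hf => ?_⟩ <;>
    simp only [SchwartzMap.fourier_coe]
  · calc 𝓕 η 0 = ∫ x, η x := by simp [Real.fourier_eq]
      _ = 1 := by rw [integral_complex_ofReal, b.integral_normed, Complex.ofReal_one]
  · calc ‖𝓕 η x‖ ≤ ∫ x, ‖η x‖ := norm_fourier_le_integral_norm η x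
      _ = 1 := by
        simp only [η, Complex.norm_real, Real.norm_of_nonneg (b.nonneg_normed _), b.integral_normed]
  · refine (hf.mul_fourier hη.continuous hηc).mono ?_
    rw [sub_eq_add_neg, ← neg_zero (G := V), ← neg_closedBall]
    exact Set.add_subset_add_left (Set.neg_subset_neg.mpr hηs)

lemma exists_schwartzMap_norm_le_div_one_add_pow {E : Type*} [NormedAddCommGroup E]
    [NormedSpace ℝ E] (k : SchwartzMap E ℂ) (n : ℕ) :
    ∃ C > 0, ∀ x, ‖k x‖ ≤ C / (1 + ‖x‖) ^ n := by
  refine ⟨2 ^ n * (Finset.Iic (n, 0)).sup (fun m => SchwartzMap.seminorm ℝ m.1 m.2) k + 1,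
    by positivity, fun x => ?_⟩
  have h := SchwartzMap.one_add_le_sup_seminorm_apply (𝕜 := ℝ) (m := (n, 0)) le_rfl le_rfl k x
  rw [norm_iteratedFDeriv_zero] at h
  rw [le_div_iff₀ (by positivity), mul_comm]
  linarith

end Kernel

section Jensen

open Real (circleAverage)

lemma one_le_divisor_of_analyticOnNhd_of_eq_zero {f : ℂ → ℂ} {U : Set ℂ} {w z : ℂ}
    (hf : AnalyticOnNhd ℂ f U) (hU : IsPreconnected U) (hw : w ∈ U) (hfw : f w ≠ 0) (hz : z ∈ U)
    (hfz : f z = 0) : 1 ≤ MeromorphicOn.divisor f U z := by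
  have htop : analyticOrderAt f z ≠ ⊤ := fun h => hfw <|
    hf.eqOn_zero_of_preconnected_of_eventuallyEq_zero hU hz (analyticOrderAt_eq_top.mp h) hw
  rw [MeromorphicOn.AnalyticOnNhd.divisor_apply hf hz]
  have hne : analyticOrderAt f z ≠ 0 := (hf z hz).analyticOrderAt_ne_zero.mpr hfz
  obtain ⟨n, hn⟩ := ENat.ne_top_iff_exists.mp htop
  rw [← hn] at hne ⊢
  simpa [Nat.one_le_iff_ne_zero] using hne

lemma sum_log_add_log_norm_le_circleAverage {f : ℂ → ℂ} {c : ℂ} {R : ℝ} (hR : 0 < R)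
    (hf : AnalyticOnNhd ℂ f (closedBall c R)) (hfc : f c ≠ 0) (Λ : Finset ℂ)
    (hΛ : ∀ z ∈ Λ, z ∈ closedBall c R) (hfΛ : ∀ z ∈ Λ, f z = 0) :
    ∑ z ∈ Λ, Real.log (R * ‖c - z‖⁻¹) + Real.log ‖f c‖ ≤
      circleAverage (fun z => Real.log ‖f z‖) c R := by
  rw [← abs_of_pos hR] at hf hΛ
  rw [hf.circleAverage_log_norm hR.ne' hfc]
  gcongr
  set D := MeromorphicOn.divisor f (closedBall c |R|)
  have hlog : ∀ z ∈ closedBall c |R|, 0 ≤ Real.log (R * ‖c - z‖⁻¹) := by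
    intro z hz
    rcases eq_or_ne c z with rfl | hcz
    · simp
    refine Real.log_nonneg ?_
    rw [← div_eq_mul_inv, one_le_div (norm_sub_pos_iff.mpr hcz), ← dist_eq_norm']
    simpa only [mem_closedBall, abs_of_pos hR] using hz
  have hfin : (Function.support fun u => (D u : ℝ) * Real.log (R * ‖c - u‖⁻¹)).Finite :=
    (D.finiteSupport (isCompact_closedBall c |R|)).subset fun u hu hDu => hu (by simp [hDu])
  have hnonneg : ∀ u, 0 ≤ (D u : ℝ) * Real.log (R * ‖c - u‖⁻¹) := by
    intro u
    by_cases hu : u ∈ closedBall c |R|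
    · exact mul_nonneg (mod_cast MeromorphicOn.AnalyticOnNhd.divisor_nonneg hf u) (hlog u hu)
    · simp [D.apply_eq_zero_of_notMem hu]
  calc ∑ z ∈ Λ, Real.log (R * ‖c - z‖⁻¹)
      ≤ ∑ z ∈ Λ, (D z : ℝ) * Real.log (R * ‖c - z‖⁻¹) := by
        refine Finset.sum_le_sum fun z hz => le_mul_of_one_le_left (hlog z (hΛ z hz)) ?_
        exact_mod_cast one_le_divisor_of_analyticOnNhd_of_eq_zero hf
          (convex_closedBall c |R|).isPreconnected (mem_closedBall_self (abs_nonneg R)) hfc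
          (hΛ z hz) (hfΛ z hz)
    _ ≤ ∑ᶠ u, (D u : ℝ) * Real.log (R * ‖c - u‖⁻¹) := by
        rw [finsum_eq_sum_of_support_subset (s := hfin.toFinset ∪ Λ) _
          (by simp [Set.subset_union_left])]
        exact Finset.sum_le_sum_of_subset_of_nonneg Finset.subset_union_right
          fun u _ _ => hnonneg u

lemma circleAverage_abs_im {R : ℝ} (hR : 0 ≤ R) :
    circleAverage (fun z => |z.im|) 0 R = 2 * R / Real.pi := by
  have hsin : ∫ θ in (0 : ℝ)..Real.pi, |Real.sin θ| = 2 := by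
    rw [intervalIntegral.integral_congr (g := Real.sin)]
    · norm_num [integral_sin]
    · rw [Set.uIcc_of_le Real.pi_pos.le]
      exact fun θ hθ => abs_of_nonneg (Real.sin_nonneg_of_nonneg_of_le_pi hθ.1 hθ.2)
  have hper : Function.Periodic (fun θ => |Real.sin θ|) Real.pi := fun θ => by
    simp only [Real.sin_add_pi, abs_neg]
  have hsin' : ∫ θ in (0 : ℝ)..2 * Real.pi, |Real.sin θ| = 4 := by
    have h := hper.intervalIntegral_add_zsmul_eq 2 0 (fun _ _ =>
      Continuous.intervalIntegrable (by fun_prop) _ _)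
    norm_num [hsin] at h
    simpa using h
  simp only [Real.circleAverage, circleMap_zero_im, abs_mul, abs_of_nonneg hR,
    intervalIntegral.integral_const_mul, hsin', smul_eq_mul]
  field_simp
  ring

lemma circleAverage_log_norm_le_of_norm_le_exp {f : ℂ → ℂ} {M A R : ℝ} (hR : 0 ≤ R)
    (hM : 1 ≤ M) (hA : 0 ≤ A) (hf : MeromorphicOn f (sphere 0 |R|))
    (hfM : ∀ z ∈ sphere (0 : ℂ) R, ‖f z‖ ≤ M * Real.exp (A * |z.im|)) :
    circleAverage (fun z => Real.log ‖f z‖) 0 R ≤ Real.log M + A * (2 * R / Real.pi) := by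
  have him : CircleIntegrable (fun z : ℂ => A * |z.im|) 0 R :=
    ContinuousOn.circleIntegrable hR (by fun_prop)
  calc circleAverage (fun z => Real.log ‖f z‖) 0 R
      ≤ circleAverage (fun z : ℂ => Real.log M + A * |z.im|) 0 R := by
        refine Real.circleAverage_mono hf.circleIntegrable_log_norm
          ((circleIntegrable_const _ _ _).add him) fun z hz => ?_
        rw [abs_of_nonneg hR] at hz
        rcases (norm_nonneg (f z)).eq_or_lt with h | h
        · rw [← h, Real.log_zero]
          exact add_nonneg (Real.log_nonneg hM) (by positivity)
        · refine (Real.log_le_log h (hfM z hz)).trans_eq ?_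
          rw [Real.log_mul (by positivity) (Real.exp_ne_zero _), Real.log_exp]
    _ = Real.log M + A * (2 * R / Real.pi) := by
        rw [Real.circleAverage_fun_add (circleIntegrable_const _ _ _) him,
          Real.circleAverage_const, ← circleAverage_abs_im hR]
        simpa using Real.circleAverage_fun_smul (a := A) (f := fun z : ℂ => |z.im|)

lemma mul_sub_le_sum_log_of_card_le {ι : Type*} {c R t₀ : ℝ} (ht₀ : 0 < t₀) (hR : t₀ ≤ R)
    (s : Finset ι) (ρ : ι → ℝ) (hρ : ∀ i ∈ s, 0 < ρ i) (hρR : ∀ i ∈ s, ρ i ≤ R)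
    (hcard : ∀ t, t₀ ≤ t → t ≤ R → c * t ≤ {i ∈ s | ρ i ≤ t}.card) :
    c * (R - t₀) ≤ ∑ i ∈ s, Real.log (R * (ρ i)⁻¹) := by
  have hinv : IntegrableOn (fun t : ℝ => t⁻¹) (Set.Icc t₀ R) :=
    (continuousOn_inv₀.mono fun _ ht => (ht₀.trans_le ht.1).ne').integrableOn_Icc
  have hind : ∀ i, IntegrableOn ((Set.Ici (ρ i)).indicator fun t => t⁻¹) (Set.Icc t₀ R) :=
    fun i => hinv.indicator measurableSet_Ici
  calc c * (R - t₀) = ∫ _ in Set.Icc t₀ R, c := by simp [hR, mul_comm]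
    _ ≤ ∫ t in Set.Icc t₀ R, ∑ i ∈ s, (Set.Ici (ρ i)).indicator (fun t => t⁻¹) t := by
        refine setIntegral_mono_on (by simp) (integrable_finsetSum _ fun i _ => hind i)
          measurableSet_Icc fun t ht => ?_
        have ht0 : 0 < t := ht₀.trans_le ht.1
        simp only [Set.indicator_apply, Set.mem_Ici, ← Finset.sum_filter, Finset.sum_const,
          nsmul_eq_mul, ← div_eq_mul_inv]
        exact (le_div_iff₀ ht0).mpr (hcard t ht.1 ht.2)
    _ = ∑ i ∈ s, ∫ t in Set.Icc t₀ R, (Set.Ici (ρ i)).indicator (fun t => t⁻¹) t :=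
        integral_finsetSum _ fun i _ => hind i
    _ ≤ ∑ i ∈ s, Real.log (R * (ρ i)⁻¹) := by
        refine Finset.sum_le_sum fun i hi => ?_
        have hset : Set.Icc t₀ R ∩ Set.Ici (ρ i) = Set.Icc (max t₀ (ρ i)) R := by
          ext t; simp only [Set.mem_inter_iff, Set.mem_Icc, Set.mem_Ici, sup_le_iff]; tauto
        have hmax : max t₀ (ρ i) ≤ R := max_le hR (hρR i hi)
        rw [setIntegral_indicator measurableSet_Ici, hset, integral_Icc_eq_integral_Ioc,
          ← intervalIntegral.integral_of_le hmax,
          integral_inv_of_pos (lt_max_of_lt_left ht₀) (ht₀.trans_le hR), div_eq_mul_inv]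
        have hρi : 0 < ρ i := hρ i hi
        have hR0 : 0 < R := ht₀.trans_le hR
        gcongr
        exact le_max_right _ _

lemma mul_sub_add_log_norm_le_of_zeros {f : ℂ → ℂ} {M A c t₀ R : ℝ} (hf : Differentiable ℂ f)
    (hf0 : f 0 ≠ 0) (hM : 1 ≤ M) (hA : 0 ≤ A)
    (hfM : ∀ z ∈ sphere (0 : ℂ) R, ‖f z‖ ≤ M * Real.exp (A * |z.im|)) (ht₀ : 0 < t₀) (hR : t₀ ≤ R)
    (Λ : Finset ℂ) (hΛR : ∀ z ∈ Λ, ‖z‖ ≤ R) (hfΛ : ∀ z ∈ Λ, f z = 0)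
    (hcard : ∀ t, t₀ ≤ t → t ≤ R → c * t ≤ {z ∈ Λ | ‖z‖ ≤ t}.card) :
    c * (R - t₀) + Real.log ‖f 0‖ ≤ Real.log M + A * (2 * R / Real.pi) := by
  have hR0 : 0 < R := ht₀.trans_le hR
  have hne : ∀ z ∈ Λ, 0 < ‖z‖ := fun z hz => norm_pos_iff.mpr fun h => hf0 (h ▸ hfΛ z hz)
  calc c * (R - t₀) + Real.log ‖f 0‖
      ≤ ∑ z ∈ Λ, Real.log (R * ‖0 - z‖⁻¹) + Real.log ‖f 0‖ := by
        simp only [zero_sub, norm_neg]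
        gcongr
        exact mul_sub_le_sum_log_of_card_le ht₀ hR Λ norm hne hΛR hcard
    _ ≤ circleAverage (fun z => Real.log ‖f z‖) 0 R :=
        sum_log_add_log_norm_le_circleAverage hR0 (fun z _ => hf.analyticAt z) hf0 Λ
          (by simpa using hΛR) hfΛ
    _ ≤ Real.log M + A * (2 * R / Real.pi) :=
        circleAverage_log_norm_le_of_norm_le_exp hR0.le hM hA
          (fun z _ => (hf.analyticAt z).meromorphicAt) hfM

end Jensen

section SeparatedSet

lemma exists_ncard_le_of_totallyBounded_of_separated {X : Type*} [PseudoMetricSpace X] {K : Set X}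
    (hK : TotallyBounded K) {δ : ℝ} (hδ : 0 < δ) :
    ∃ N : ℕ, ∀ S ⊆ K, (∀ x ∈ S, ∀ y ∈ S, x ≠ y → δ ≤ dist x y) → S.Finite ∧ S.ncard ≤ N := by
  obtain ⟨t, ht, hKt⟩ := Metric.totallyBounded_iff.mp hK (δ / 2) (half_pos hδ)
  refine ⟨t.ncard, fun S hSK hS => ?_⟩
  have hnear : ∀ x : S, ∃ y ∈ t, dist (x : X) y < δ / 2 := fun x => by
    simpa using hKt (hSK x.2)
  choose c hct hc using hnear
  have hinj : Function.Injective c := fun x y hxy => by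
    by_contra hne
    have hxy' := dist_triangle_right (x : X) y (c x)
    have hfar := hS x x.2 y y.2 (Subtype.coe_ne_coe.mpr hne)
    linarith [hc x, hxy ▸ hc y]
  have : Finite t := ht
  have hS' : Finite S := Finite.of_injective (fun x => (⟨c x, hct x⟩ : t))
    fun x y hxy => hinj (congrArg Subtype.val hxy)
  exact ⟨hS', Nat.card_le_card_of_injective (fun x => (⟨c x, hct x⟩ : t))
    fun x y hxy => hinj (congrArg Subtype.val hxy)⟩

lemma norm_eval_interpolate_le {𝕜 ι : Type*} [NormedField 𝕜] [DecidableEq ι] {s : Finset ι}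
    {v r : ι → 𝕜} {z : 𝕜} {δ ε R : ℝ} (hδ : 0 < δ) (hv : ∀ i ∈ s, ‖v i‖ ≤ R)
    (hsep : ∀ i ∈ s, ∀ j ∈ s, i ≠ j → δ ≤ dist (v i) (v j)) (hr : ∀ i ∈ s, ‖r i‖ ≤ ε)
    (hz : ‖z‖ ≤ R) :
    ‖(Lagrange.interpolate s v r).eval z‖ ≤ s.card * (ε * max 1 (2 * R / δ) ^ s.card) := by
  have hbasis : ∀ i ∈ s, ‖(Lagrange.basis s v i).eval z‖ ≤ max 1 (2 * R / δ) ^ s.card := by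
    intro i hi
    calc ‖(Lagrange.basis s v i).eval z‖ = ∏ j ∈ s.erase i, ‖v i - v j‖⁻¹ * ‖z - v j‖ := by
          simp [Lagrange.basis, Lagrange.basisDivisor, Polynomial.eval_prod, norm_prod]
      _ ≤ max 1 (2 * R / δ) ^ (s.erase i).card := by
          rw [← Finset.prod_const]
          refine Finset.prod_le_prod (fun j _ => by positivity) fun j hj => le_max_of_le_right ?_
          obtain ⟨hji, hj⟩ := Finset.mem_erase.mp hj
          rw [div_eq_inv_mul, ← dist_eq_norm]
          gcongr
          · exact hsep i hi j hj hji.symm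
          · linarith [norm_sub_le z (v j), hv j hj]
      _ ≤ max 1 (2 * R / δ) ^ s.card :=
          pow_le_pow_right₀ (le_max_left _ _) Finset.card_erase_le
  calc ‖(Lagrange.interpolate s v r).eval z‖
      ≤ ∑ i ∈ s, ‖r i‖ * ‖(Lagrange.basis s v i).eval z‖ := by
        rw [Lagrange.interpolate_apply, Polynomial.eval_finsetSum]
        exact (norm_sum_le _ _).trans_eq (by simp)
    _ ≤ s.card * (ε * max 1 (2 * R / δ) ^ s.card) := by
        rw [← nsmul_eq_mul]
        refine Finset.sum_le_card_nsmul _ _ _ fun i hi => ?_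
        exact mul_le_mul (hr i hi) (hbasis i hi) (norm_nonneg _) ((norm_nonneg _).trans (hr i hi))

lemma exists_log_add_lt_mul_sub {A d t₀ M c : ℝ} (hAd : 2 * A / Real.pi < d) :
    ∃ R, t₀ ≤ R ∧ Real.log M + A * (2 * R / Real.pi) < d * (R - t₀) + Real.log c := by
  have hlim : Tendsto (fun R => (d - 2 * A / Real.pi) * R) atTop atTop :=
    tendsto_id.const_mul_atTop (sub_pos.mpr hAd)
  obtain ⟨R, hRt₀, hR⟩ := ((eventually_ge_atTop t₀).and
    (hlim.eventually_gt_atTop (Real.log M + d * t₀ - Real.log c))).exists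
  refine ⟨R, hRt₀, ?_⟩
  have hrw : A * (2 * R / Real.pi) = 2 * A / Real.pi * R := by ring
  rw [hrw]
  linarith

-- Subtracting from `E` its interpolation polynomial on `s`, which is small by `hε`, produces zeros
-- on all of `s`; the count of zeros is then bounded by Jensen's formula.
lemma mul_sub_add_log_le_of_norm_le_on_finset {A d t₀ δ ε M c R : ℝ} (hA : 0 ≤ A) (ht₀ : 0 < t₀)
    (hR : t₀ ≤ R) (hδ : 0 < δ) (hM : 0 ≤ M) (hc : 0 < c) {E : ℂ → ℂ} (hE : Differentiable ℂ E)
    (hEM : ∀ z, ‖E z‖ ≤ M * Real.exp (A * |z.im|)) (hE0 : c ≤ ‖E 0‖) (s : Finset ℂ)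
    (hsR : ∀ z ∈ s, ‖z‖ ≤ R) (hsep : ∀ x ∈ s, ∀ y ∈ s, x ≠ y → δ ≤ dist x y)
    (hcard : ∀ t, t₀ ≤ t → t ≤ R → d * t ≤ {z ∈ s | ‖z‖ ≤ t}.card)
    (hEs : ∀ z ∈ s, ‖E z‖ ≤ ε)
    (hε : s.card * (ε * max 1 (2 * R / δ) ^ s.card) ≤ min (c / 2) 1) :
    d * (R - t₀) + Real.log (c / 2) ≤ Real.log (M + 1) + A * (2 * R / Real.pi) := by
  classical
  set p := Lagrange.interpolate s id E
  have hp : ∀ z, ‖z‖ ≤ R → ‖p.eval z‖ ≤ min (c / 2) 1 := fun z hz =>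
    (norm_eval_interpolate_le hδ hsR hsep hEs hz).trans hε
  have hF0 : c / 2 ≤ ‖E 0 - p.eval 0‖ := by
    have hp0 := (hp 0 (by simpa using ht₀.le.trans hR)).trans (min_le_left _ _)
    linarith [norm_sub_norm_le (E 0) (p.eval 0)]
  calc d * (R - t₀) + Real.log (c / 2) ≤ d * (R - t₀) + Real.log ‖E 0 - p.eval 0‖ := by gcongr
    _ ≤ Real.log (M + 1) + A * (2 * R / Real.pi) := by
      refine mul_sub_add_log_norm_le_of_zeros (f := fun z => E z - p.eval z)
        (hE.sub p.differentiable) (norm_pos_iff.mp (by linarith)) (by linarith) hA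
        (fun z hz => ?_) ht₀ hR s hsR (fun z hz => ?_) hcard
      · have hpz := (hp z (mem_sphere_zero_iff_norm.mp hz).le).trans (min_le_right _ _)
        have hexp : 1 ≤ Real.exp (A * |z.im|) := Real.one_le_exp (by positivity)
        linarith [norm_sub_le (E z) (p.eval z), hEM z]
      · exact sub_eq_zero.mpr
          (Lagrange.eval_interpolate_at_node E (Function.injective_id.injOn) hz).symm

lemma exists_le_norm_of_separated {A d t₀ δ M c : ℝ} (hA : 0 ≤ A) (hAd : 2 * A / Real.pi < d)
    (ht₀ : 0 < t₀) (hδ : 0 < δ) (hM : 0 ≤ M) (hc : 0 < c) :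
    ∃ ε > 0, ∀ Λ : Set ℂ, (∀ x ∈ Λ, ∀ y ∈ Λ, x ≠ y → δ ≤ dist x y) →
      (∀ t, t₀ ≤ t → d * t ≤ (Λ ∩ closedBall 0 t).ncard) →
      ∀ E : ℂ → ℂ, Differentiable ℂ E → (∀ z, ‖E z‖ ≤ M * Real.exp (A * |z.im|)) →
        c ≤ ‖E 0‖ → ∃ z ∈ Λ, ε ≤ ‖E z‖ := by
  obtain ⟨R, hRt₀, hR⟩ := exists_log_add_lt_mul_sub (t₀ := t₀) (M := M + 1) (c := c / 2) hAd
  obtain ⟨N, hN⟩ := exists_ncard_le_of_totallyBounded_of_separated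
    (isCompact_closedBall (0 : ℂ) R).totallyBounded hδ
  have : 0 < R := ht₀.trans_le hRt₀
  set B : ℝ := N * max 1 (2 * R / δ) ^ N + 1
  have hB : 0 < B := by positivity
  refine ⟨min (c / 2) 1 / B, by positivity, fun Λ hsep hcount E hE hEM hE0 => ?_⟩
  by_contra! hsmall
  obtain ⟨hfin, hcard⟩ := hN (Λ ∩ closedBall 0 R) Set.inter_subset_right
    fun x hx y hy => hsep x hx.1 y hy.1
  lift Λ ∩ closedBall 0 R to Finset ℂ using hfin with s hs
  have hmem : ∀ z, z ∈ s ↔ z ∈ Λ ∧ ‖z‖ ≤ R := fun z => by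
    rw [← Finset.mem_coe, hs]; simp
  rw [Set.ncard_coe_finset] at hcard
  refine hR.not_ge (mul_sub_add_log_le_of_norm_le_on_finset hA ht₀ hRt₀ hδ hM hc hE hEM hE0 s
    (fun z hz => ((hmem z).mp hz).2)
    (fun x hx y hy => hsep x ((hmem x).mp hx).1 y ((hmem y).mp hy).1) (fun t ht htR => ?_)
    (fun x hx => (hsmall x ((hmem x).mp hx).1).le) ?_)
  · convert hcount t ht
    rw [← Set.ncard_coe_finset]
    congr 1
    ext z
    simp only [Finset.coe_filter, hmem, Set.mem_inter_iff, mem_closedBall_zero_iff]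
    exact ⟨fun h => ⟨h.1.1, h.2⟩, fun h => ⟨⟨h.1, h.2.trans htR⟩, h.2⟩⟩
  · calc s.card * (min (c / 2) 1 / B * max 1 (2 * R / δ) ^ s.card)
        ≤ N * (min (c / 2) 1 / B * max 1 (2 * R / δ) ^ N) := by
          gcongr
          exact le_max_left _ _
      _ = min (c / 2) 1 / B * (B - 1) := by simp only [B]; ring
      _ ≤ min (c / 2) 1 := by
          rw [div_mul_eq_mul_div, div_le_iff₀ hB]
          exact mul_le_mul_of_nonneg_left (sub_le_self B zero_le_one) (by positivity)

end SeparatedSet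

section Extension

lemma differentiable_integral_mul_cexp {μ : Measure ℝ} {m : ℝ → ℂ} {a : ℝ}
    (hm : Integrable m μ) (ha : ∀ᵐ τ ∂μ, |τ| ≤ a) :
    Differentiable ℂ fun z : ℂ => ∫ τ, m τ * Complex.exp (z * τ) ∂μ := by
  intro z₀
  have hexp : ∀ z ∈ ball z₀ 1, ∀ τ : ℝ, |τ| ≤ a →
      ‖Complex.exp (z * τ)‖ ≤ Real.exp ((‖z₀‖ + 1) * a) := by
    intro z hz τ hτ
    refine (Complex.norm_exp_le_exp_norm _).trans (Real.exp_le_exp.mpr ?_)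
    rw [norm_mul, Complex.norm_real, Real.norm_eq_abs]
    gcongr
    linarith [norm_sub_norm_le z z₀, mem_ball_iff_norm.mp hz]
  have hmeas : ∀ z : ℂ, AEStronglyMeasurable (fun τ : ℝ => m τ * Complex.exp (z * τ)) μ :=
    fun z => hm.1.mul (Continuous.aestronglyMeasurable (by fun_prop))
  refine (hasDerivAt_integral_of_dominated_loc_of_deriv_le
    (F' := fun z τ => m τ * (Complex.exp (z * τ) * τ))
    (bound := fun τ => ‖m τ‖ * (Real.exp ((‖z₀‖ + 1) * a) * a)) (ball_mem_nhds z₀ one_pos)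
    (.of_forall hmeas) ?_ (hm.1.mul (Continuous.aestronglyMeasurable (by fun_prop))) ?_
    (hm.norm.mul_const _) ?_).2.differentiableAt
  · refine Integrable.mono' (hm.norm.mul_const (Real.exp ((‖z₀‖ + 1) * a))) (hmeas z₀)
      (ha.mono fun τ hτ => ?_)
    rw [norm_mul]
    exact mul_le_mul_of_nonneg_left (hexp z₀ (mem_ball_self one_pos) τ hτ) (norm_nonneg _)
  · refine ha.mono fun τ hτ z hz => ?_
    rw [norm_mul, norm_mul, Complex.norm_real]
    gcongr
    exacts [hexp z hz τ hτ, hτ]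
  · refine .of_forall fun τ z _ => ?_
    simpa using (((hasDerivAt_id z).mul_const (τ : ℂ)).cexp).const_mul (m τ)

lemma MemBernstein.exists_differentiable_extension {F : ℝ → ℂ} {a : ℝ} (ha : 0 ≤ a)
    (hF : MemBernstein (closedBall 0 a) F) (hi : Integrable F) :
    ∃ E : ℂ → ℂ, Differentiable ℂ E ∧
      (∀ z, ‖E z‖ ≤ (∫ x, ‖F x‖) * (2 * a) * Real.exp (2 * Real.pi * a * |z.im|)) ∧
      ∀ t : ℝ, E t = F t := by
  have hm : Continuous (𝓕 F) := continuous_fourier_of_integrable hi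
  have hmi : IntegrableOn (𝓕 F) (closedBall 0 a) :=
    hm.continuousOn.integrableOn_compact (isCompact_closedBall 0 a)
  have hm0 : ∀ τ ∉ closedBall (0 : ℝ) a, 𝓕 F τ = 0 := fun τ hτ =>
    hF.fourier_eq_zero isClosed_closedBall hi hτ
  have hae : ∀ᵐ τ ∂volume.restrict (closedBall (0 : ℝ) a), |τ| ≤ a :=
    (ae_restrict_mem measurableSet_closedBall).mono fun τ hτ => by simpa using hτ
  refine ⟨fun z => ∫ τ in closedBall (0 : ℝ) a,
    𝓕 F τ * Complex.exp (2 * Real.pi * Complex.I * z * τ), ?_, fun z => ?_, fun t => ?_⟩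
  · exact (differentiable_integral_mul_cexp hmi hae).comp
      (differentiable_id.const_mul (2 * Real.pi * Complex.I))
  · have hbound : ∀ τ ∈ closedBall (0 : ℝ) a,
        ‖𝓕 F τ * Complex.exp (2 * Real.pi * Complex.I * z * τ)‖ ≤
          (∫ x, ‖F x‖) * Real.exp (2 * Real.pi * a * |z.im|) := by
      intro τ hτ
      have hre : (2 * Real.pi * Complex.I * z * τ).re = 2 * Real.pi * (-(τ * z.im)) := by
        simp; ring
      rw [norm_mul, Complex.norm_exp, hre, mul_assoc (2 * Real.pi)]
      gcongr
      · exact norm_fourier_le_integral_norm F τ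
      · rw [mem_closedBall_zero_iff, Real.norm_eq_abs] at hτ
        exact (neg_le_abs _).trans (by rw [abs_mul]; gcongr)
    refine (norm_setIntegral_le_of_norm_le_const measure_closedBall_lt_top hbound).trans_eq ?_
    rw [Measure.real, Real.volume_closedBall, ENNReal.toReal_ofReal (by positivity)]
    ring
  · have hmi' : Integrable (𝓕 F) :=
      (integrableOn_iff_integrable_of_support_subset fun τ hτ => by_contra fun h => hτ (hm0 τ h)).mp
        hmi
    conv_rhs => rw [← hF.1.fourierInv_fourier_eq hi hmi', Real.fourierInv_eq']
    refine (setIntegral_eq_integral_of_forall_compl_eq_zero fun τ hτ => ?_).trans ?_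
    · rw [hm0 τ hτ, zero_mul]
    refine integral_congr_ae (.of_forall fun τ => ?_)
    simp only [smul_eq_mul, mul_comm (𝓕 F τ), RCLike.inner_apply, conj_trivial]
    push_cast
    ring_nf

end Extension

section Density

lemma eventually_mul_volume_le_natCard {X : Type*} [NormedAddCommGroup X] [MeasureSpace X]
    {Λ : Set X} {D : ℝ} (hD : D < lowerUniformDensity Λ) :
    ∀ᶠ r in atTop, ∀ x : X,
      D * (volume (closedBall x r)).toReal ≤ Nat.card ↥(Λ ∩ closedBall x r) := by
  have hnonneg : ∀ r x, (0 : ℝ) ≤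
      Nat.card ↥(Λ ∩ closedBall x r) / (volume (closedBall x r)).toReal := fun r x => by positivity
  filter_upwards [eventually_lt_of_lt_liminf hD
    ⟨0, eventually_map.mpr <| .of_forall fun r => Real.iInf_nonneg (hnonneg r)⟩] with r hr x
  exact mul_le_of_le_div₀ (by positivity) (by positivity)
    (hr.le.trans (ciInf_le ⟨0, Set.forall_mem_range.mpr (hnonneg r)⟩ x))

end Density

section SamplingIntervals

lemma exists_le_norm_of_separated_real {A d t₀ δ M c : ℝ} (hA : 0 ≤ A) (hAd : 2 * A / Real.pi < d)
    (ht₀ : 0 < t₀) (hδ : 0 < δ) (hM : 0 ≤ M) (hc : 0 < c) :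
    ∃ ε > 0, ∀ H : Set ℝ, (∀ x ∈ H, ∀ y ∈ H, x ≠ y → δ ≤ dist x y) →
      ∀ x₀, (∀ t, t₀ ≤ t → d * t ≤ Nat.card ↥(H ∩ closedBall x₀ t)) →
      ∀ E : ℂ → ℂ, Differentiable ℂ E → (∀ z, ‖E z‖ ≤ M * Real.exp (A * |z.im|)) →
        c ≤ ‖E 0‖ → ∃ t ∈ H, ε ≤ ‖E (t - x₀ : ℝ)‖ := by
  obtain ⟨ε, hε, hlow⟩ := exists_le_norm_of_separated hA hAd ht₀ hδ hM hc
  refine ⟨ε, hε, fun H hsep x₀ hcount E hE hEM hE0 => ?_⟩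
  set ι : ℝ → ℂ := fun t => (t - x₀ : ℝ)
  have hι : Isometry ι := Complex.isometry_ofReal.comp (IsometryEquiv.subRight x₀).isometry
  have hιsep : ∀ x ∈ ι '' H, ∀ y ∈ ι '' H, x ≠ y → δ ≤ dist x y := by
    rintro _ ⟨x, hx, rfl⟩ _ ⟨y, hy, rfl⟩ hxy
    exact (hsep x hx y hy (mt (congrArg ι) hxy)).trans_eq (hι.dist_eq x y).symm
  have hιcount : ∀ t, t₀ ≤ t → d * t ≤ (ι '' H ∩ closedBall 0 t).ncard := by
    intro t ht
    have hιx₀ : ι x₀ = 0 := by simp [ι]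
    rw [← Set.image_inter_preimage, ← hιx₀, hι.preimage_closedBall,
      Set.ncard_image_of_injective _ hι.injective, ← Nat.card_coe_set_eq]
    exact hcount t ht
  obtain ⟨_, ⟨t, ht, rfl⟩, hz⟩ := hlow (ι '' H) hιsep hιcount E hE hEM hE0
  exact ⟨t, ht, hz⟩

theorem isSamplingSet_closedBall_of_lt_lowerUniformDensity {H : Set ℝ} {a : ℝ} (ha : 0 ≤ a)
    (hH : UniformlyDiscrete H) (haH : 2 * a < lowerUniformDensity H) :
    IsSamplingSet (closedBall 0 a) H := by
  obtain ⟨δ, hδ, hsep⟩ := hH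
  obtain ⟨D, haD, hDH⟩ := exists_between haH
  obtain ⟨a', haa', ha'D⟩ : ∃ a', a < a' ∧ a' < D / 2 := exists_between (by linarith)
  obtain ⟨t₀, ht₀⟩ := eventually_atTop.mp (eventually_mul_volume_le_natCard hDH)
  obtain ⟨k, hk0, hk1, hk⟩ := exists_localizing_kernel ℝ (sub_pos.mpr haa')
  have ha'0 : 0 ≤ a' := ha.trans haa'.le
  obtain ⟨ε, hε, hlow⟩ := exists_le_norm_of_separated_real (A := 2 * Real.pi * a') (d := 2 * D)
    (t₀ := max t₀ 1) (M := (∫ x, ‖k x‖) * (2 * a')) (c := 1 / 2) (by positivity)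
    (by field_simp; linarith) (by positivity) hδ (by positivity) (by norm_num)
  refine isSamplingSet_of_exists_le_norm hε fun x₀ f hf hf1 hf0 => ?_
  have hg := hk _ f hf
  rw [closedBall_add_closedBall (by simpa using ha) (by linarith), add_sub_cancel, add_zero] at hg
  have hgk : ∀ x, ‖f x * k x‖ ≤ ‖k x‖ := fun x => by
    rw [norm_mul]; exact mul_le_of_le_one_left (norm_nonneg _) (hf1 x)
  have hgi : Integrable fun x => f x * k x :=
    k.integrable.mono hg.1.aestronglyMeasurable (.of_forall hgk)
  obtain ⟨E, hE, hEM, hEg⟩ := hg.exists_differentiable_extension ha'0 hgi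
  have hcount : ∀ t, max t₀ 1 ≤ t → 2 * D * t ≤ Nat.card ↥(H ∩ closedBall x₀ t) := fun t ht => by
    have ht0 : 0 ≤ t := zero_le_one.trans ((le_max_right _ _).trans ht)
    have hball := ht₀ t ((le_max_left _ _).trans ht) x₀
    rw [Real.volume_closedBall, ENNReal.toReal_ofReal (by positivity)] at hball
    linarith
  have hEM' : ∀ z, ‖E z‖ ≤ (∫ x, ‖k x‖) * (2 * a') * Real.exp (2 * Real.pi * a' * |z.im|) :=
    fun z => (hEM z).trans <| by
      gcongr
      exacts [hgi.norm, k.integrable.norm, hgk]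
  obtain ⟨t, ht, hz⟩ := hlow H hsep x₀ hcount E hE hEM'
    (by rw [← Complex.ofReal_zero, hEg, hk0, mul_one]; exact hf0)
  rw [hEg, norm_mul] at hz
  exact ⟨t, ht, hz.trans (mul_le_of_le_one_right (norm_nonneg _) (hk1 _))⟩

end SamplingIntervals

section BernsteinInequality

lemma norm_fourierInv_sub_le {m : V → ℂ} {A : ℝ} (hm : Integrable m)
    (hA : ∀ ξ ∉ closedBall 0 A, m ξ = 0) (x y : V) :
    ‖𝓕⁻ m x - 𝓕⁻ m y‖ ≤ 2 * Real.pi * A * ‖x - y‖ * ∫ ξ, ‖m ξ‖ := by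
  have hphase : ∀ s t : ℝ, ‖(𝐞 s : ℂ) - 𝐞 t‖ ≤ 2 * Real.pi * |s - t| := fun s t => by
    rw [← sub_add_cancel s t, AddChar.map_add_eq_mul, Circle.coe_mul, ← sub_one_mul, norm_mul,
      Circle.norm_coe, mul_one, Real.fourierChar_apply, mul_comm _ Complex.I, add_sub_cancel_right]
    refine Real.norm_exp_I_mul_ofReal_sub_one_le.trans_eq ?_
    rw [Real.norm_eq_abs, abs_mul, abs_of_pos Real.two_pi_pos]
  have hi : ∀ z, Integrable fun ξ => 𝐞 ⟪ξ, z⟫ • m ξ := fun z => by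
    simpa using (VectorFourier.fourierIntegral_convergent_iff (L := innerₗ V)
      Real.continuous_fourierChar continuous_inner (-z)).mpr hm
  rw [Real.fourierInv_eq, Real.fourierInv_eq, ← integral_sub (hi x) (hi y), ← integral_const_mul]
  refine norm_integral_le_of_norm_le (hm.norm.const_mul _) (ae_of_all _ fun ξ => ?_)
  by_cases hξ : ξ ∈ closedBall 0 A
  · rw [mem_closedBall_zero_iff] at hξ
    rw [Circle.smul_def, Circle.smul_def, ← sub_smul, norm_smul]
    gcongr
    calc ‖(𝐞 ⟪ξ, x⟫ : ℂ) - 𝐞 ⟪ξ, y⟫‖ ≤ 2 * Real.pi * |⟪ξ, x - y⟫| := by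
          rw [inner_sub_right]; exact hphase _ _
      _ ≤ 2 * Real.pi * (A * ‖x - y‖) := by
          gcongr
          exact (abs_real_inner_le_norm _ _).trans (by gcongr)
      _ = 2 * Real.pi * A * ‖x - y‖ := by ring
  · simp [hA ξ hξ]

lemma exists_schwartzMap_norm_sub_le {E : Type*} [NormedAddCommGroup E] [NormedSpace ℝ E]
    (k : SchwartzMap E ℂ) : ∃ C > 0, ∀ x y, ‖k x - k y‖ ≤ C * ‖x - y‖ := by
  obtain ⟨C, hC, hk⟩ := k.decay 0 1
  refine ⟨C, hC, fun x y => convex_univ.norm_image_sub_le_of_norm_fderiv_le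
    (fun z _ => k.differentiableAt) (fun z _ => ?_) (Set.mem_univ y) (Set.mem_univ x)⟩
  simpa [norm_iteratedFDeriv_one] using hk z

lemma MemBernstein.norm_sub_le_of_integrable {A : ℝ} {g : V → ℂ} (hA : 0 ≤ A)
    (hg : MemBernstein (closedBall 0 A) g) (hi : Integrable g) (x y : V) :
    ‖g x - g y‖ ≤ 2 * Real.pi * A * ‖x - y‖ *
      (volume.real (closedBall (0 : V) A) * ∫ z, ‖g z‖) := by
  have hm : ∀ ξ ∉ closedBall 0 A, 𝓕 g ξ = 0 :=
    fun ξ hξ => hg.fourier_eq_zero isClosed_closedBall hi hξ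
  have hmi : Integrable (𝓕 g) :=
    (continuous_fourier_of_integrable hi).integrable_of_hasCompactSupport (HasCompactSupport.intro
      (isCompact_closedBall 0 A) hm)
  have hL1 : ∫ ξ, ‖𝓕 g ξ‖ ≤ volume.real (closedBall (0 : V) A) * ∫ z, ‖g z‖ := by
    rw [← setIntegral_eq_integral_of_forall_compl_eq_zero fun ξ hξ => by rw [hm ξ hξ, norm_zero],
      mul_comm]
    refine (Real.le_norm_self _).trans (norm_setIntegral_le_of_norm_le_const
      measure_closedBall_lt_top fun ξ _ => ?_)
    rw [norm_norm]
    exact norm_fourier_le_integral_norm g ξ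
  have hLip := norm_fourierInv_sub_le hmi hm x y
  rw [hg.1.fourierInv_fourier_eq hi hmi] at hLip
  exact hLip.trans (by gcongr)

variable (V) in
lemma MemBernstein.exists_norm_sub_le {a : ℝ} (ha : 0 ≤ a) :
    ∃ C > 0, ∀ F : V → ℂ, MemBernstein (closedBall 0 a) F → ∀ M, (∀ x, ‖F x‖ ≤ M) →
      ∀ x y, ‖F x - F y‖ ≤ C * M * ‖x - y‖ := by
  obtain ⟨k, hk0, -, hk⟩ := exists_localizing_kernel V one_pos
  obtain ⟨L, hL, hkL⟩ := exists_schwartzMap_norm_sub_le k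
  set I := 2 * Real.pi * (a + 1) * (volume.real (closedBall (0 : V) (a + 1)) * ∫ z, ‖k z‖) with hI
  refine ⟨I + L, by positivity, fun F hF M hM x y => ?_⟩
  have : 0 ≤ M := (norm_nonneg _).trans (hM 0)
  let g : V → ℂ := fun z => F (z + y) * k z
  have hg : MemBernstein (closedBall 0 (a + 1)) g :=
    (hk _ _ (hF.comp_add_right y)).mono (by
      rw [closedBall_add_closedBall ha zero_le_one, add_zero])
  have hgk : ∀ z, ‖g z‖ ≤ M * ‖k z‖ := fun z => norm_mul_le_of_le (hM _) le_rfl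
  have hgi : Integrable g :=
    (k.integrable.norm.const_mul M).mono' hg.1.aestronglyMeasurable (ae_of_all _ hgk)
  have hg_sub : ‖g (x - y) - g 0‖ ≤ I * M * ‖x - y‖ := by
    refine (hg.norm_sub_le_of_integrable (by positivity) hgi _ _).trans ?_
    have hgM : ∫ z, ‖g z‖ ≤ M * ∫ z, ‖k z‖ := by
      rw [← integral_const_mul]
      exact integral_mono hgi.norm (k.integrable.norm.const_mul M) hgk
    rw [sub_zero]
    refine (mul_le_mul_of_nonneg_left (mul_le_mul_of_nonneg_left hgM measureReal_nonneg)
      (by positivity)).trans_eq ?_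
    rw [hI]; ring
  have hFk : ‖F x * (k 0 - k (x - y))‖ ≤ M * (L * ‖x - y‖) := by
    refine norm_mul_le_of_le (hM x) ((hkL _ _).trans_eq ?_)
    rw [zero_sub, norm_neg]
  calc ‖F x - F y‖ = ‖(g (x - y) - g 0) + F x * (k 0 - k (x - y))‖ := by
        simp only [g, hk0, sub_add_cancel, zero_add]
        ring_nf
    _ ≤ I * M * ‖x - y‖ + M * (L * ‖x - y‖) := norm_add_le_of_le hg_sub hFk
    _ = (I + L) * M * ‖x - y‖ := by ring

end BernsteinInequality

section Stability

variable {E : Type*} [NormedAddCommGroup E] [NormedSpace ℝ E]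

lemma sum_div_two_pow_div_one_add_sq_le {T : ℝ} (hT : 0 ≤ T) (J : ℕ) :
    ∑ j ∈ Finset.range J, T / 2 ^ j / (1 + T / 2 ^ j) ^ 2 ≤ 2 := by
  let u : ℕ → ℝ := fun j => T / 2 ^ j / (1 + T / 2 ^ j)
  have htel : ∀ j, T / 2 ^ j / (1 + T / 2 ^ j) ^ 2 ≤ 2 * (u j - u (j + 1)) := by
    intro j
    have ht : 0 ≤ T / 2 ^ j := by positivity
    simp only [u, pow_succ (2 : ℝ), ← div_div T]
    generalize T / 2 ^ j = t at ht
    have hsub : t / (1 + t) - t / 2 / (1 + t / 2) = t / ((1 + t) * (2 + t)) := by field_simp; ring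
    rw [hsub, ← mul_div_assoc, div_le_div_iff₀ (by positivity) (by positivity)]
    nlinarith [mul_nonneg ht ht, mul_nonneg (mul_nonneg ht ht) ht]
  have hu0 : u 0 ≤ 1 := div_le_one_of_le₀ (by linarith [show 0 ≤ T / 2 ^ 0 by positivity])
    (by positivity)
  have huJ : 0 ≤ u J := by positivity
  calc _ ≤ ∑ j ∈ Finset.range J, 2 * (u j - u (j + 1)) := Finset.sum_le_sum fun j _ => htel j
    _ = 2 * (u 0 - u J) := by rw [← Finset.mul_sum, Finset.sum_range_sub']
    _ ≤ 2 := by linarith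

lemma MemBernstein.comp_smul_mul_comp_smul {a a' ε δ : ℝ} {F k : V → ℂ} (ha' : 0 ≤ a')
    (hε : 0 ≤ ε) (hδ : 0 < δ) (hδ1 : δ < 1) (h : (1 - δ) * a' + δ * ε ≤ a)
    (hF : MemBernstein (closedBall 0 a') F)
    (hk : ∀ (Ω : Set V) (f : V → ℂ), MemBernstein Ω f →
      MemBernstein (Ω + closedBall 0 ε) fun x => f x * k x) :
    MemBernstein (closedBall 0 a) fun x => F ((1 - δ) • x) * k (δ • x) := by
  have hr : 0 < (1 - δ) / δ := div_pos (by linarith) hδ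
  have hFk := (hk _ _ (hF.comp_smul hr.ne')).comp_smul hδ.ne'
  simp only [smul_smul, div_mul_cancel₀ _ hδ.ne'] at hFk
  refine hFk.mono ?_
  rw [_root_.smul_closedBall _ _ ha', smul_zero, Real.norm_of_nonneg hr.le,
    closedBall_add_closedBall (by positivity) hε, _root_.smul_closedBall _ _ (by positivity),
    add_zero, smul_zero, Real.norm_of_nonneg hδ.le]
  refine closedBall_subset_closedBall (Eq.trans_le ?_ h)
  field_simp

/-- The sum of the localized contractions `F ((1 - δ) • x) * k (δ • x)` of `F` over the dyadic
scales `δ = 1/2, 1/4, …, 1/2 ^ J`. -/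
def dyadicSum (F k : E → ℂ) (J : ℕ) (x : E) : ℂ :=
  ∑ j ∈ Finset.range J, F ((1 - (2 ^ (j + 1) : ℝ)⁻¹) • x) * k ((2 ^ (j + 1) : ℝ)⁻¹ • x)

lemma dyadicSum_zero {k : E → ℂ} (hk : k 0 = 1) (F : E → ℂ) (J : ℕ) :
    dyadicSum F k J 0 = J * F 0 := by
  simp [dyadicSum, hk]

lemma MemBernstein.dyadicSum {a ε : ℝ} {F k : V → ℂ} {J : ℕ} (ha : 0 ≤ a) (hε : 0 ≤ ε)
    (hF : MemBernstein (closedBall 0 (a + (a - ε) / 2 ^ J)) F) (hεa : ε ≤ a)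
    (hk : ∀ (Ω : Set V) (f : V → ℂ), MemBernstein Ω f →
      MemBernstein (Ω + closedBall 0 ε) fun x => f x * k x) :
    MemBernstein (closedBall 0 a) (dyadicSum F k J) := by
  refine MemBernstein.sum fun j hj => ?_
  have hj : (2 ^ J : ℝ)⁻¹ ≤ (2 ^ (j + 1) : ℝ)⁻¹ := by
    gcongr
    exacts [one_le_two, Finset.mem_range.mp hj]
  have hj1 : (2 ^ (j + 1) : ℝ)⁻¹ < 1 := inv_lt_one_of_one_lt₀ (one_lt_pow₀ one_lt_two (by simp))
  have hJ : (0 : ℝ) < (2 ^ J)⁻¹ := by positivity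
  rw [div_eq_mul_inv] at hF
  generalize (2 ^ J : ℝ)⁻¹ = δ' at *
  generalize (2 ^ (j + 1) : ℝ)⁻¹ = δ at *
  refine hF.comp_smul_mul_comp_smul (by nlinarith) hε (hJ.trans_le hj) hj1 ?_ hk
  nlinarith [mul_nonneg (sub_nonneg.mpr hj) (sub_nonneg.mpr hεa),
    mul_nonneg (mul_nonneg hJ.le (hJ.le.trans hj)) (sub_nonneg.mpr hεa)]

lemma norm_dyadicSum_le {F k : E → ℂ} {L C b : ℝ} (hL : 0 ≤ L) (hC : 0 ≤ C)
    (hF : ∀ x y, ‖F x - F y‖ ≤ L * ‖x - y‖) (hk1 : ∀ x, ‖k x‖ ≤ 1)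
    (hk : ∀ x, ‖k x‖ ≤ C / (1 + ‖x‖) ^ 2) {x : E} (hx : ‖F x‖ ≤ b) (J : ℕ) :
    ‖dyadicSum F k J x‖ ≤ J * b + 2 * (L * C) := by
  have hb : 0 ≤ b := (norm_nonneg _).trans hx
  have hterm : ∀ δ : ℝ, 0 ≤ δ → ‖F ((1 - δ) • x) * k (δ • x)‖ ≤
      b + L * C * (δ * ‖x‖ / (1 + δ * ‖x‖) ^ 2) := by
    intro δ hδ
    have hnorm : ‖δ • x‖ = δ * ‖x‖ := by rw [norm_smul, Real.norm_of_nonneg hδ]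
    have hFδ : ‖F ((1 - δ) • x)‖ ≤ b + L * (δ * ‖x‖) := by
      have hsub := hF ((1 - δ) • x) x
      have hdiff : (1 - δ) • x - x = -(δ • x) := by module
      rw [hdiff, norm_neg, hnorm] at hsub
      linarith [norm_le_norm_add_norm_sub' (F ((1 - δ) • x)) (F x)]
    have hkδ := hk (δ • x)
    rw [hnorm] at hkδ
    calc ‖F ((1 - δ) • x) * k (δ • x)‖ ≤ (b + L * (δ * ‖x‖)) * ‖k (δ • x)‖ := by
          rw [norm_mul]; gcongr
      _ = b * ‖k (δ • x)‖ + L * (δ * ‖x‖) * ‖k (δ • x)‖ := add_mul _ _ _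
      _ ≤ b * 1 + L * (δ * ‖x‖) * (C / (1 + δ * ‖x‖) ^ 2) := by
          gcongr
          exact hk1 _
      _ = b + L * C * (δ * ‖x‖ / (1 + δ * ‖x‖) ^ 2) := by ring
  have hscale : ∀ j : ℕ, (2 ^ (j + 1) : ℝ)⁻¹ * ‖x‖ = ‖x‖ / 2 / 2 ^ j := fun j => by
    rw [pow_succ]; field_simp
  calc ‖dyadicSum F k J x‖
      ≤ ∑ j ∈ Finset.range J,
          (b + L * C * (‖x‖ / 2 / 2 ^ j / (1 + ‖x‖ / 2 / 2 ^ j) ^ 2)) := by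
        refine norm_sum_le_of_le _ fun j _ => ?_
        rw [← hscale]
        exact hterm _ (by positivity)
    _ = J * b + L * C * ∑ j ∈ Finset.range J,
          (‖x‖ / 2 / 2 ^ j / (1 + ‖x‖ / 2 / 2 ^ j) ^ 2) := by
        rw [Finset.sum_add_distrib, ← Finset.mul_sum, Finset.sum_const, Finset.card_range,
          nsmul_eq_mul]
    _ ≤ J * b + 2 * (L * C) := by
        rw [mul_comm 2]
        gcongr
        exact sum_div_two_pow_div_one_add_sq_le (by positivity) J

-- If `f` is at least `1 / 2` in norm at the origin but tiny on `P - x₀`, its dyadic sum has norm at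
-- least `J / 2` at the origin, but on `P - x₀` is bounded independently of `J` up to `J` times the
-- tiny term. Contraction by `1 - δ` is what brings the spectrum back into the ball of radius `a`.
theorem IsSamplingSet.exists_gt_closedBall {P : Set V} {a : ℝ} (ha : 0 < a)
    (h : IsSamplingSet (closedBall 0 a) P) : ∃ a' > a, IsSamplingSet (closedBall 0 a') P := by
  obtain ⟨K, hK, hP⟩ := isSamplingSet_iff.mp h
  obtain ⟨B, hB, hLip⟩ := MemBernstein.exists_norm_sub_le V (a := 2 * a) (by positivity)
  obtain ⟨k, hk0, hk1, hk⟩ := exists_localizing_kernel V (half_pos ha)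
  obtain ⟨C, hC, hkC⟩ := exists_schwartzMap_norm_le_div_one_add_pow k 2
  obtain ⟨J, hJ⟩ := exists_nat_gt (8 * K * (B * C))
  have hJ0 : (0 : ℝ) < J := lt_of_le_of_lt (by positivity) hJ
  have haJ : 0 < (a - a / 2) / 2 ^ J := div_pos (by linarith) (by positivity)
  refine ⟨a + (a - a / 2) / 2 ^ J, by linarith, isSamplingSet_of_exists_le_norm
    (ε := (8 * K)⁻¹) (by positivity) fun x₀ f hf hf1 hf0 => ?_⟩
  by_contra! hsmall
  have hf2 : MemBernstein (closedBall 0 (2 * a)) f :=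
    hf.mono (closedBall_subset_closedBall (by
      linarith [div_le_self (show 0 ≤ a - a / 2 by linarith) (one_le_pow₀ (n := J) one_le_two)]))
  have hg := (hf.dyadicSum ha.le (half_pos ha).le (by linarith) hk).comp_add_right (-x₀)
  have hgP : ∀ p ∈ P, ‖dyadicSum f k J (p + -x₀)‖ ≤ J * (8 * K)⁻¹ + 2 * (B * 1 * C) :=
    fun p hp => norm_dyadicSum_le (by positivity) hC.le (hLip f hf2 1 hf1) hk1 hkC
      (by rw [← sub_eq_add_neg]; exact (hsmall p hp).le) J
  have hg0 := hP _ hg _ (by positivity) hgP x₀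
  rw [add_neg_cancel, dyadicSum_zero hk0, norm_mul, Complex.norm_natCast] at hg0
  have hK8 : K * (J * (8 * K)⁻¹) = J / 8 := by field_simp
  nlinarith

end Stability

section DensityNecessity

lemma fourierInv_indicator_eq_sinc {A : ℝ} (hA : 0 < A) (x : ℝ) :
    𝓕⁻ ((Set.Icc (-A) A).indicator fun _ => ((2 * A : ℝ) : ℂ)⁻¹) x =
      Real.sinc (2 * Real.pi * A * x) := by
  have hind : ∀ ξ : ℝ, 𝐞 ⟪ξ, x⟫ • (Set.Icc (-A) A).indicator (fun _ => ((2 * A : ℝ) : ℂ)⁻¹) ξ =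
      (Set.Icc (-A) A).indicator (fun ξ : ℝ => Complex.exp ((2 * Real.pi * x * ξ : ℝ) * Complex.I) *
        ((2 * A : ℝ) : ℂ)⁻¹) ξ := by
    intro ξ
    by_cases hξ : ξ ∈ Set.Icc (-A) A
    · simp [hξ, Circle.smul_def, Real.fourierChar_apply, mul_assoc]
    · simp [hξ]
  have hAC : ((2 * A : ℝ) : ℂ) ≠ 0 := Complex.ofReal_ne_zero.mpr (by positivity)
  rw [Real.fourierInv_eq]
  simp only [hind]
  rw [integral_indicator measurableSet_Icc, integral_mul_const, integral_Icc_eq_integral_Ioc,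
    ← intervalIntegral.integral_of_le (by linarith)]
  rcases eq_or_ne x 0 with rfl | hx
  · simp only [mul_zero, zero_mul, Complex.ofReal_zero, Complex.exp_zero, Real.sinc_zero,
      intervalIntegral.integral_const, Complex.real_smul, mul_one, sub_neg_eq_add, ← two_mul]
    rw [mul_inv_cancel₀ hAC, Complex.ofReal_one]
  · have hc : 2 * Real.pi * x ≠ 0 := by positivity
    rw [intervalIntegral.integral_comp_mul_left (fun t : ℝ => Complex.exp (t * Complex.I)) hc,
      mul_neg, integral_exp_mul_I_eq_sinc, Complex.real_smul, mul_right_comm _ x A]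
    push_cast
    have hAC' : (A : ℂ) ≠ 0 := Complex.ofReal_ne_zero.mpr hA.ne'
    have hxC : (x : ℂ) ≠ 0 := Complex.ofReal_ne_zero.mpr hx
    have hpi : (Real.pi : ℂ) ≠ 0 := Complex.ofReal_ne_zero.mpr Real.pi_ne_zero
    field_simp

lemma exists_interpolating_kernel {A a : ℝ} (hA : 0 < A) (hAa : A < a) :
    ∃ φ : ℝ → ℂ, MemBernstein (closedBall 0 a) φ ∧ φ 0 = 1 ∧
      (∀ n : ℤ, n ≠ 0 → φ (n / (2 * A)) = 0) ∧ ∃ C > 0, ∀ x, ‖φ x‖ ≤ C / (1 + |x|) ^ 3 := by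
  obtain ⟨k, hk0, -, hk⟩ := exists_localizing_kernel ℝ (sub_pos.mpr hAa)
  obtain ⟨C, hC, hkC⟩ := exists_schwartzMap_norm_le_div_one_add_pow k 3
  have hsinc : MemBernstein (closedBall 0 A) fun x : ℝ =>
      ((Real.sinc (2 * Real.pi * A * x) : ℝ) : ℂ) := by
    simp only [← fourierInv_indicator_eq_sinc hA]
    refine memBernstein_fourierInv ((integrable_indicator_iff measurableSet_Icc).mpr
      (integrableOn_const (by simp))) fun ξ hξ => ?_
    rw [Real.closedBall_eq_Icc, zero_sub, zero_add] at hξ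
    exact Set.indicator_of_notMem hξ _
  refine ⟨fun x => (Real.sinc (2 * Real.pi * A * x) : ℝ) * k x, ?_, ?_, fun n hn => ?_,
    C, hC, fun x => ?_⟩
  · simpa [closedBall_add_closedBall hA.le (sub_pos.mpr hAa).le] using hk _ _ hsinc
  · simp [hk0]
  · have harg : 2 * Real.pi * A * (n / (2 * A)) = n * Real.pi := by field_simp
    beta_reduce
    rw [harg, Real.sinc_of_ne_zero (by simp [hn, Real.pi_ne_zero]), Real.sin_int_mul_pi, zero_div,
      Complex.ofReal_zero, zero_mul]
  · refine (norm_mul_le_of_le ?_ (hkC x)).trans_eq (one_mul _)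
    rw [Complex.norm_real]
    exact Real.abs_sinc_le_one _

lemma inv_one_add_abs_sub_div_sq_le {B : ℝ} (hB : 0 < B) (t : ℝ) (j : ℤ) :
    ((1 + |t - j / B|) ^ 2)⁻¹ ≤
      (2 + B) ^ 2 * (1 / |((⌊B * t⌋ - j : ℤ) : ℝ) + 1 / 2| ^ (2 : ℝ)) := by
  have hdist : |B * t - j| = B * |t - j / B| := by
    rw [← abs_of_pos hB, ← abs_mul, abs_of_pos hB, mul_sub, mul_div_cancel₀ _ hB.ne']
  have hfloor : |((⌊B * t⌋ - j : ℤ) : ℝ) + 1 / 2 - (B * t - j)| ≤ 1 := by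
    rw [abs_le]
    push_cast
    constructor <;> linarith [Int.floor_le (B * t), Int.lt_floor_add_one (B * t)]
  have hnear : |((⌊B * t⌋ - j : ℤ) : ℝ) + 1 / 2| ≤ (2 + B) * (1 + |t - j / B|) := by
    linarith [abs_sub_abs_le_abs_sub (((⌊B * t⌋ - j : ℤ) : ℝ) + 1 / 2) (B * t - j),
      abs_nonneg (t - j / B)]
  have hne : 0 < |((⌊B * t⌋ - j : ℤ) : ℝ) + 1 / 2| := by
    generalize ⌊B * t⌋ - j = n
    refine abs_pos.mpr fun h => ?_
    have hodd : ((2 * n + 1 : ℤ) : ℝ) = 0 := by push_cast; linarith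
    have hodd := Int.cast_eq_zero.mp hodd
    omega
  rw [Real.rpow_two, mul_one_div, inv_eq_one_div, div_le_div_iff₀ (by positivity) (by positivity),
    one_mul, ← mul_pow]
  gcongr

lemma exists_sum_inv_one_add_abs_sub_sq_le {B : ℝ} (hB : 0 < B) :
    ∃ Q > 0, ∀ (t : ℝ) (s : Finset ℤ), ∑ j ∈ s, ((1 + |t - j / B|) ^ 2)⁻¹ ≤ Q := by
  obtain ⟨g, hg, hg0, hterm⟩ : ∃ g : ℤ → ℝ, Summable g ∧ (∀ i, 0 ≤ g i) ∧
      ∀ (t : ℝ) (j : ℤ), ((1 + |t - j / B|) ^ 2)⁻¹ ≤ (2 + B) ^ 2 * g (⌊B * t⌋ - j) :=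
    ⟨_, (Real.summable_one_div_int_add_rpow (1 / 2) 2).mpr one_lt_two, fun i => by positivity,
      inv_one_add_abs_sub_div_sq_le hB⟩
  have hsum : 0 ≤ ∑' i, g i := tsum_nonneg hg0
  refine ⟨(2 + B) ^ 2 * ∑' i, g i + 1, by positivity, fun t s => ?_⟩
  have hshift : Summable fun j => g (⌊B * t⌋ - j) := (Equiv.subLeft ⌊B * t⌋).summable_iff.mpr hg
  calc ∑ j ∈ s, ((1 + |t - j / B|) ^ 2)⁻¹ ≤ (2 + B) ^ 2 * ∑ j ∈ s, g (⌊B * t⌋ - j) := by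
        rw [Finset.mul_sum]; exact Finset.sum_le_sum fun j _ => hterm t j
    _ ≤ (2 + B) ^ 2 * ∑' j, g (⌊B * t⌋ - j) := by
        gcongr; exact hshift.sum_le_tsum _ fun j _ => hg0 _
    _ = (2 + B) ^ 2 * ∑' i, g i := congrArg _ ((Equiv.subLeft ⌊B * t⌋).tsum_eq g)
    _ ≤ (2 + B) ^ 2 * ∑' i, g i + 1 := le_add_of_nonneg_right zero_le_one

lemma exists_sum_mul_eq_zero_of_ncard_lt {X ι : Type*} {S : Set X} (hS : S.Finite) {s : Finset ι}
    (h : S.ncard < s.card) (f : ι → X → ℂ) :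
    ∃ α : ι → ℂ, (∃ i ∈ s, α i = 1) ∧ (∀ i ∈ s, ‖α i‖ ≤ 1) ∧ ∀ x ∈ S, ∑ i ∈ s, α i * f i x = 0 := by
  classical
  have := hS.fintype
  let A : Matrix S s ℂ := Matrix.of fun x i => f i x
  have hker : LinearMap.ker A.mulVecLin ≠ ⊥ := LinearMap.ker_ne_bot_of_finrank_lt (by
    rw [Module.finrank_fintype_fun_eq_card, Module.finrank_fintype_fun_eq_card,
      Fintype.card_coe, ← Nat.card_eq_fintype_card]
    exact h)
  obtain ⟨β, hβ, hβ0⟩ := (Submodule.ne_bot_iff _).mp hker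
  obtain ⟨j, hj⟩ := Function.ne_iff.mp hβ0
  obtain ⟨i₀, -, hi₀⟩ := Finset.exists_max_image Finset.univ (fun i => ‖β i‖) ⟨j, Finset.mem_univ j⟩
  have hβi₀ : β i₀ ≠ 0 :=
    norm_pos_iff.mp ((norm_pos_iff.mpr hj).trans_le (hi₀ j (Finset.mem_univ j)))
  refine ⟨fun i => if hi : i ∈ s then β ⟨i, hi⟩ / β i₀ else 0, ⟨i₀, i₀.2, ?_⟩, fun i hi => ?_,
    fun x hx => ?_⟩
  · simp [hβi₀]
  · simp only [hi, dite_true, norm_div]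
    exact div_le_one_of_le₀ (hi₀ _ (Finset.mem_univ _)) (norm_nonneg _)
  · have hx0 : ∑ i : s, f i x * β i = 0 := congrFun (LinearMap.mem_ker.mp hβ) ⟨x, hx⟩
    rw [← Finset.sum_coe_sort]
    simp only [Finset.coe_mem, dite_true, Subtype.coe_eta, div_mul_eq_mul_div, ← Finset.sum_div]
    rw [Finset.sum_congr rfl fun i _ => mul_comm (β i) _, hx0, zero_div]

lemma natCard_inter_closedBall_le {H : Set ℝ} {δ : ℝ} (hδ : 0 < δ)
    (hH : ∀ x ∈ H, ∀ y ∈ H, x ≠ y → δ ≤ dist x y) {r : ℝ} (hr : 0 ≤ r) :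
    (Nat.card ↥(H ∩ closedBall 0 r) : ℝ) ≤ 2 * r / δ + 2 := by
  have hmaps : ∀ x ∈ H ∩ closedBall 0 r,
      ⌊x / δ⌋ ∈ (Finset.Icc ⌊-r / δ⌋ ⌊r / δ⌋ : Set ℤ) := by
    rintro x ⟨-, hx⟩
    rw [mem_closedBall_zero_iff, Real.norm_eq_abs, abs_le] at hx
    rw [Finset.coe_Icc]
    exact ⟨Int.floor_mono (by gcongr; exact hx.1), Int.floor_mono (by gcongr; exact hx.2)⟩
  have hinj : Set.InjOn (fun x : ℝ => ⌊x / δ⌋) (H ∩ closedBall 0 r) := by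
    rintro x ⟨hx, -⟩ y ⟨hy, -⟩ hxy
    by_contra hne
    have hlt := Int.abs_sub_lt_one_of_floor_eq_floor hxy
    rw [← sub_div, abs_div, abs_of_pos hδ, div_lt_one hδ, ← Real.dist_eq] at hlt
    exact (hH x hx y hy hne).not_gt hlt
  have hcard := Set.ncard_le_ncard_of_injOn _ hmaps hinj (Finset.finite_toSet _)
  have hle : ⌊-r / δ⌋ ≤ ⌊r / δ⌋ + 1 := by
    have := Int.floor_mono (show -r / δ ≤ r / δ by gcongr; linarith)
    omega
  rw [Set.ncard_coe_finset, Int.card_Icc] at hcard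
  calc (Nat.card ↥(H ∩ closedBall 0 r) : ℝ) ≤ ((⌊r / δ⌋ + 1 - ⌊-r / δ⌋ : ℤ) : ℝ) := by
        rw [← Int.toNat_of_nonneg (by omega : 0 ≤ ⌊r / δ⌋ + 1 - ⌊-r / δ⌋)]
        exact_mod_cast hcard
    _ ≤ 2 * r / δ + 2 := by
        push_cast
        linarith [Int.floor_le (r / δ), Int.lt_floor_add_one (-r / δ), neg_div δ r,
          mul_div_assoc 2 r δ]

lemma frequently_exists_natCard_lt {H : Set ℝ} (hH : UniformlyDiscrete H) {q : ℝ}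
    (hq : lowerUniformDensity H < q) :
    ∃ᶠ r in atTop, ∃ c, (Nat.card ↥(H ∩ closedBall c r) : ℝ) < q * (2 * r) := by
  obtain ⟨δ, hδ, hsep⟩ := hH
  have hvol : ∀ r : ℝ, 0 < r → ∀ c : ℝ, (volume (closedBall c r)).toReal = 2 * r := fun r hr c => by
    rw [Real.volume_closedBall, ENNReal.toReal_ofReal (by positivity)]
  have hbdd : IsBoundedUnder (· ≤ ·) atTop fun r : ℝ => ⨅ x : ℝ,
      (Nat.card ↥(H ∩ closedBall x r) : ℝ) / (volume (closedBall x r)).toReal := by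
    refine ⟨1 / δ + 1, eventually_map.mpr ((eventually_ge_atTop 1).mono fun r hr => ?_)⟩
    refine (ciInf_le ⟨0, Set.forall_mem_range.mpr fun x => by positivity⟩ 0).trans ?_
    rw [hvol r (by linarith), div_le_iff₀ (by linarith)]
    refine (natCard_inter_closedBall_le hδ hsep (by linarith)).trans ?_
    calc 2 * r / δ + 2 ≤ 2 * r / δ + 2 * r := by linarith
      _ = (1 / δ + 1) * (2 * r) := by ring
  refine ((frequently_lt_of_liminf_lt hbdd.isCoboundedUnder_ge hq).and_eventually
    (eventually_gt_atTop 0)).mono fun r ⟨hrq, hr⟩ => ?_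
  obtain ⟨c, hc⟩ := exists_lt_of_ciInf_lt hrq
  exact ⟨c, by rwa [hvol r hr, div_lt_iff₀ (by linarith)] at hc⟩

lemma exists_ncard_lt_card_of_lowerUniformDensity_lt {H : Set ℝ} (hH : UniformlyDiscrete H)
    {B : ℝ} (hB : 0 < B) (hHB : lowerUniformDensity H < B) (T : ℝ) :
    ∃ (c r : ℝ) (s : Finset ℤ), (∀ j ∈ s, |j / B - c| ≤ r - T) ∧
      (H ∩ closedBall c r).Finite ∧ (H ∩ closedBall c r).ncard < s.card := by
  obtain ⟨q, hHq, hqB⟩ := exists_between hHB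
  obtain ⟨r, ⟨c, hc⟩, hr⟩ := ((frequently_exists_natCard_lt hH hHq).and_eventually
    (eventually_ge_atTop ((2 * B * T + 1) / (2 * (B - q))))).exists
  rw [div_le_iff₀ (by linarith)] at hr
  set u := B * (c - (r - T)) with hu
  set w := B * (c + (r - T)) with hw
  refine ⟨c, r, Finset.Icc ⌈u⌉ ⌊w⌋, fun j hj => ?_, ?_, ?_⟩
  · rw [Finset.mem_Icc, Int.ceil_le, Int.le_floor, hu, hw, ← le_div_iff₀' hB, ← div_le_iff₀' hB]
      at hj
    rw [abs_le]
    constructor <;> linarith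
  · obtain ⟨δ, hδ, hsep⟩ := hH
    obtain ⟨N, hN⟩ := exists_ncard_le_of_totallyBounded_of_separated
      (isCompact_closedBall c r).totallyBounded hδ
    exact (hN _ Set.inter_subset_right fun x hx y hy => hsep x hx.1 y hy.1).1
  · have hcount : w - u - 1 ≤ (Finset.Icc ⌈u⌉ ⌊w⌋).card :=
      calc w - u - 1 ≤ ((⌊w⌋ + 1 - ⌈u⌉ : ℤ) : ℝ) := by
            push_cast
            linarith [Int.lt_floor_add_one w, Int.ceil_lt_add_one u]
        _ ≤ (Finset.Icc ⌈u⌉ ⌊w⌋).card := by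
            rw [Int.card_Icc]
            exact_mod_cast Int.self_le_toNat _
    rw [← Nat.card_coe_set_eq, ← Nat.cast_lt (α := ℝ)]
    linarith

lemma norm_sum_mul_comp_sub_le {ι : Type*} {s : Finset ι} {φ : ℝ → ℂ} {C Q T t : ℝ} {y : ι → ℝ}
    {α : ι → ℂ} (hC : 0 ≤ C) (hφ : ∀ x, ‖φ x‖ ≤ C / (1 + |x|) ^ 3)
    (hQ : ∑ j ∈ s, ((1 + |t - y j|) ^ 2)⁻¹ ≤ Q) (hα : ∀ j ∈ s, ‖α j‖ ≤ 1) (hT : 0 ≤ T)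
    (ht : ∀ j ∈ s, T ≤ |t - y j|) :
    ‖∑ j ∈ s, α j * φ (t - y j)‖ ≤ C / (1 + T) * Q := by
  have hterm : ∀ j ∈ s, ‖α j * φ (t - y j)‖ ≤ C / (1 + T) * ((1 + |t - y j|) ^ 2)⁻¹ := by
    intro j hj
    have hTj := ht j hj
    calc ‖α j * φ (t - y j)‖ ≤ 1 * (C / (1 + |t - y j|) ^ 3) := norm_mul_le_of_le (hα j hj) (hφ _)
      _ = C / (1 + |t - y j|) * ((1 + |t - y j|) ^ 2)⁻¹ := by field_simp
      _ ≤ C / (1 + T) * ((1 + |t - y j|) ^ 2)⁻¹ := by gcongr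
  refine (norm_sum_le_of_le s hterm).trans ?_
  rw [← Finset.mul_sum]
  gcongr

lemma exists_memBernstein_eq_one_norm_le_on {H : Set ℝ} {a ε : ℝ} (ha : 0 < a) (hε : 0 < ε)
    (hH : UniformlyDiscrete H) (hHa : lowerUniformDensity H < 2 * a) :
    ∃ F : ℝ → ℂ, MemBernstein (closedBall 0 a) F ∧ (∃ x, F x = 1) ∧ ∀ t ∈ H, ‖F t‖ ≤ ε := by
  obtain ⟨B, hHB, hBa⟩ := exists_between (max_lt hHa (by positivity : 0 < 2 * a))
  obtain ⟨hHB, hB⟩ := max_lt_iff.mp hHB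
  obtain ⟨φ, hφ, hφ0, hφn, C, hC, hφC⟩ :=
    exists_interpolating_kernel (half_pos hB) (by linarith : B / 2 < a)
  rw [mul_div_cancel₀ B two_ne_zero] at hφn
  obtain ⟨Q, hQ, hsumQ⟩ := exists_sum_inv_one_add_abs_sub_sq_le hB
  set T := C * Q / ε with hT
  have hT0 : 0 < T := by positivity
  obtain ⟨c, r, s, hs, hfin, hcard⟩ := exists_ncard_lt_card_of_lowerUniformDensity_lt hH hB hHB T
  obtain ⟨α, ⟨j₀, hj₀, hαj₀⟩, hα1, hα⟩ :=
    exists_sum_mul_eq_zero_of_ncard_lt hfin hcard fun j t => φ (t - j / B)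
  refine ⟨fun x => ∑ j ∈ s, α j * φ (x - j / B),
    MemBernstein.sum fun j _ => (hφ.comp_add_right (-(j / B))).const_mul _,
    ⟨j₀ / B, ?_⟩, fun t ht => ?_⟩
  · refine (Finset.sum_eq_single_of_mem j₀ hj₀ fun j _ hj => ?_).trans ?_
    · rw [← sub_div, ← Int.cast_sub, hφn _ (sub_ne_zero.mpr hj.symm), mul_zero]
    · rw [sub_self, hφ0, hαj₀, mul_one]
  by_cases htc : t ∈ closedBall c r
  · beta_reduce
    rw [hα t ⟨ht, htc⟩, norm_zero]
    exact hε.le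
  · rw [mem_closedBall, Real.dist_eq, not_le] at htc
    calc ‖∑ j ∈ s, α j * φ (t - j / B)‖ ≤ C / (1 + T) * Q :=
          norm_sum_mul_comp_sub_le hC.le hφC (hsumQ t s) hα1 hT0.le fun j hj => by
            linarith [abs_sub_le t (j / B) c, hs j hj]
      _ = T / (1 + T) * ε := by rw [hT]; field_simp
      _ ≤ 1 * ε := by gcongr; exact div_le_one_of_le₀ (by linarith) (by linarith)
      _ = ε := one_mul ε

theorem IsSamplingSet.two_mul_lt_lowerUniformDensity {H : Set ℝ} {a : ℝ} (ha : 0 < a)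
    (hH : UniformlyDiscrete H) (h : IsSamplingSet (closedBall 0 a) H) :
    2 * a < lowerUniformDensity H := by
  obtain ⟨a', haa', ha'⟩ := h.exists_gt_closedBall ha
  obtain ⟨K, hK, hHK⟩ := isSamplingSet_iff.mp ha'
  by_contra! hHa
  obtain ⟨F, hF, ⟨x, hx⟩, hFH⟩ := exists_memBernstein_eq_one_norm_le_on (ha.trans haa')
    (inv_pos.mpr (mul_pos two_pos hK)) hH (by linarith)
  have hbound := hHK F hF _ (by positivity) hFH x
  have hhalf : K * (2 * K)⁻¹ = 1 / 2 := by field_simp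
  rw [hx, norm_one, hhalf] at hbound
  linarith

end DensityNecessity

section Slicing

open WithLp (toLp)

variable {E : Type*} [NormedAddCommGroup E] [InnerProductSpace ℝ E]

lemma exists_linearIsometryEquiv_apply_eq [FiniteDimensional ℝ E] {v : E} (hv : ‖v‖ = 1) :
    ∃ (n : ℕ) (e : WithLp 2 (EuclideanSpace ℝ (Fin n) × ℝ) ≃ₗᵢ[ℝ] E),
      e (toLp 2 (0, 1)) = v := by
  have : Nontrivial E := ⟨v, 0, norm_ne_zero_iff.mp (hv ▸ one_ne_zero)⟩
  obtain ⟨n, hn⟩ := Nat.exists_eq_succ_of_ne_zero (Module.finrank_pos (R := ℝ) (M := E)).ne'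
  have hdim : Module.finrank ℝ (WithLp 2 (EuclideanSpace ℝ (Fin n) × ℝ)) = Module.finrank ℝ E := by
    rw [(WithLp.linearEquiv 2 ℝ _).finrank_eq]
    simp [hn]
  let e₀ := (stdOrthonormalBasis ℝ (WithLp 2 (EuclideanSpace ℝ (Fin n) × ℝ))).equiv
    (stdOrthonormalBasis ℝ E) (finCongr hdim)
  refine ⟨n, e₀.trans ((ℝ ∙ (e₀ (toLp 2 (0, 1)) - v))ᗮ).reflection, ?_⟩
  exact Submodule.reflection_sub (by rw [e₀.norm_map, hv, WithLp.norm_toLp_snd, norm_one])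

variable {W : Type*} [NormedAddCommGroup W] [InnerProductSpace ℝ W]

lemma inner_apply_toLp (e : WithLp 2 (W × ℝ) ≃ₗᵢ[ℝ] E) (y s : W) (t τ : ℝ) :
    ⟪e (toLp 2 (y, t)), e (toLp 2 (s, τ))⟫ = ⟪y, s⟫ + t * τ := by
  rw [e.inner_map_map, WithLp.prod_inner_apply, mul_comm]
  rfl

lemma norm_le_norm_apply_toLp (e : WithLp 2 (W × ℝ) ≃ₗᵢ[ℝ] E) (y : W) (t : ℝ) :
    ‖y‖ ≤ ‖e (toLp 2 (y, t))‖ := by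
  rw [e.norm_map]
  exact WithLp.norm_fst_le W (toLp 2 (y, t))

lemma apply_toLp_zero (e : WithLp 2 (W × ℝ) ≃ₗᵢ[ℝ] E) (τ : ℝ) :
    e (toLp 2 (0, τ)) = τ • e (toLp 2 (0, 1)) := by
  rw [← map_smul, ← WithLp.toLp_smul, Prod.smul_mk, smul_zero, smul_eq_mul, mul_one]

lemma inner_eq_snd {v : E} {e : WithLp 2 (W × ℝ) ≃ₗᵢ[ℝ] E} (he : e (toLp 2 (0, 1)) = v) (y : W)
    (t : ℝ) : ⟪e (toLp 2 (y, t)), v⟫ = t := by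
  rw [← he, inner_apply_toLp, inner_zero_right, zero_add, mul_one]

variable [FiniteDimensional ℝ W] [MeasurableSpace W] [BorelSpace W]

lemma measurePreserving_apply_toLp (e : WithLp 2 (W × ℝ) ≃ₗᵢ[ℝ] V) :
    MeasurePreserving fun p : W × ℝ => e (toLp 2 p) :=
  e.measurePreserving.comp (WithLp.volume_preserving_toLp W ℝ)

lemma integrable_comp_apply_toLp_iff (e : WithLp 2 (W × ℝ) ≃ₗᵢ[ℝ] V) {g : V → ℂ} :
    Integrable (fun p : W × ℝ => g (e (toLp 2 p))) ↔ Integrable g :=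
  (measurePreserving_apply_toLp e).integrable_comp_emb
    ((MeasurableEquiv.toLp 2 (W × ℝ)).trans e.toMeasurableEquiv).measurableEmbedding

lemma integral_eq_integral_slice (e : WithLp 2 (W × ℝ) ≃ₗᵢ[ℝ] V) {g : V → ℂ}
    (hg : Integrable g) : ∫ x, g x = ∫ t, ∫ y, g (e (toLp 2 (y, t))) := by
  have he := measurePreserving_apply_toLp e
  rw [← he.map_eq, integral_map he.aemeasurable (he.map_eq.symm ▸ hg.aestronglyMeasurable),
    Measure.volume_eq_prod, integral_prod_symm]
  exact (integrable_comp_apply_toLp_iff e).mpr hg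

/-- `g` is continuous and decays like `w y / (1 + t ^ 2)` in the orthonormal coordinates `(y, t)`
given by `e`, so that its slices at the heights `t` have Fourier transforms integrable in `t`. -/
structure SliceDominated (e : WithLp 2 (W × ℝ) ≃ₗᵢ[ℝ] E) (g : E → ℂ) (w : W → ℝ) : Prop where
  continuous : Continuous g
  integrable_bound : Integrable w
  norm_le : ∀ y t, ‖g (e (toLp 2 (y, t)))‖ ≤ w y * (1 + t ^ 2)⁻¹

lemma exists_sliceDominated_schwartzMap (e : WithLp 2 (W × ℝ) ≃ₗᵢ[ℝ] E) (k : SchwartzMap E ℂ) :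
    ∃ w : W → ℝ, SliceDominated e k w := by
  set m := Module.finrank ℝ W + 1 with hm
  obtain ⟨C, hC, hk⟩ := exists_schwartzMap_norm_le_div_one_add_pow k (m + 2)
  refine ⟨fun y => C * (1 + ‖y‖) ^ (-m : ℝ), k.continuous,
    (integrable_one_add_norm (by rw [hm]; push_cast; linarith)).const_mul C, fun y t => ?_⟩
  set x := e (toLp 2 (y, t)) with hx
  have hnorm : ‖x‖ ^ 2 = ‖y‖ ^ 2 + t ^ 2 := by
    rw [← real_inner_self_eq_norm_sq, hx, inner_apply_toLp, real_inner_self_eq_norm_sq, sq t]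
  have hy : ‖y‖ ≤ ‖x‖ := norm_le_norm_apply_toLp e y t
  have ht : 1 + t ^ 2 ≤ (1 + ‖x‖) ^ 2 := by nlinarith [norm_nonneg x, norm_nonneg y]
  calc ‖k x‖ ≤ C / (1 + ‖x‖) ^ (m + 2) := hk x
    _ ≤ C / ((1 + ‖y‖) ^ m * (1 + t ^ 2)) := by rw [pow_add]; gcongr
    _ = C * (1 + ‖y‖) ^ (-m : ℝ) * (1 + t ^ 2)⁻¹ := by
      rw [Real.rpow_neg (by positivity), Real.rpow_natCast]
      field_simp

/-- The Fourier transform of the slice of `g` at height `t`, in the orthonormal coordinates `e`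
whose last entry is the height. -/
def sliceFourier (e : WithLp 2 (W × ℝ) ≃ₗᵢ[ℝ] E) (g : E → ℂ) (s : W) (t : ℝ) : ℂ :=
  𝓕 (fun y => g (e (toLp 2 (y, t)))) s

lemma inv_one_add_sq_le_one (t : ℝ) : (1 + t ^ 2)⁻¹ ≤ 1 :=
  inv_le_one_of_one_le₀ (by nlinarith)

namespace SliceDominated

variable {w : W → ℝ}

section

variable {e : WithLp 2 (W × ℝ) ≃ₗᵢ[ℝ] E} {g : E → ℂ}

lemma norm_le_bound (hg : SliceDominated e g w) (y : W) (t : ℝ) :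
    ‖g (e (toLp 2 (y, t)))‖ ≤ w y := by
  have hwy : 0 ≤ w y := by simpa using (norm_nonneg _).trans (hg.norm_le y 0)
  exact (hg.norm_le y t).trans (mul_le_of_le_one_right hwy (inv_one_add_sq_le_one t))

lemma integrable_slice (hg : SliceDominated e g w) (t : ℝ) :
    Integrable fun y => g (e (toLp 2 (y, t))) :=
  hg.integrable_bound.mono'
    (hg.continuous.comp (by fun_prop)).aestronglyMeasurable (ae_of_all _ (hg.norm_le_bound · t))

lemma norm_sliceFourier_le (hg : SliceDominated e g w) (s : W) (t : ℝ) :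
    ‖sliceFourier e g s t‖ ≤ (∫ y, w y) * (1 + t ^ 2)⁻¹ := by
  refine (norm_fourier_le_integral_norm _ s).trans ?_
  rw [← integral_mul_const]
  exact integral_mono (hg.integrable_slice t).norm (hg.integrable_bound.mul_const _)
    (hg.norm_le · t)

lemma continuous_sliceFourier (hg : SliceDominated e g w) (s : W) :
    Continuous (sliceFourier e g s) := by
  have hcont := hg.continuous
  unfold sliceFourier
  simp only [Real.fourier_eq]
  refine continuous_of_dominated (fun t => Continuous.aestronglyMeasurable (by fun_prop))
    (fun t => ae_of_all _ fun y => (Circle.norm_smul _ _).trans_le (hg.norm_le_bound y t))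
    hg.integrable_bound (ae_of_all _ fun y => by fun_prop)

lemma integrable_sliceFourier (hg : SliceDominated e g w) (s : W) :
    Integrable (sliceFourier e g s) :=
  (integrable_inv_one_add_sq.const_mul _).mono' (hg.continuous_sliceFourier s).aestronglyMeasurable
    (ae_of_all _ (hg.norm_sliceFourier_le s))

lemma continuous_mul (hg : SliceDominated e g w) {f : E → ℂ} (hf : Continuous f) {M : ℝ}
    (hM : ∀ x, ‖f x‖ ≤ M) : SliceDominated e (fun x => f x * g x) fun y => M * w y where
  continuous := hf.mul hg.continuous
  integrable_bound := hg.integrable_bound.const_mul M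
  norm_le y t := by
    rw [norm_mul, mul_assoc]
    exact mul_le_mul (hM _) (hg.norm_le y t) (norm_nonneg _) ((norm_nonneg _).trans (hM 0))

lemma norm_sliceFourier_mul_le (hg : SliceDominated e g w) {f : E → ℂ} {t b : ℝ}
    (hf : ∀ y, ‖f (e (toLp 2 (y, t)))‖ ≤ b) (s : W) :
    ‖sliceFourier e (fun x => f x * g x) s t‖ ≤ b * ∫ y, w y := by
  refine (norm_fourier_le_integral_norm _ s).trans ?_
  rw [← integral_const_mul]
  refine integral_mono_of_nonneg (ae_of_all _ fun y => norm_nonneg _)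
    (hg.integrable_bound.const_mul b) (ae_of_all _ fun y => ?_)
  simp only [norm_mul]
  exact mul_le_mul (hf y) (hg.norm_le_bound y t) (norm_nonneg _) ((norm_nonneg _).trans (hf 0))

end

variable {e : WithLp 2 (W × ℝ) ≃ₗᵢ[ℝ] V} {g : V → ℂ}

lemma integrable (hg : SliceDominated e g w) : Integrable g :=
  (integrable_comp_apply_toLp_iff e).mp <|
    (hg.integrable_bound.mul_prod integrable_inv_one_add_sq).mono'
      (hg.continuous.comp (by fun_prop)).aestronglyMeasurable
      (ae_of_all _ fun p => hg.norm_le p.1 p.2)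

lemma fourier_sliceFourier (hg : SliceDominated e g w) (s : W) (τ : ℝ) :
    𝓕 (sliceFourier e g s) τ = 𝓕 g (e (toLp 2 (s, τ))) := by
  have hi : Integrable fun x => 𝐞 (-⟪x, e (toLp 2 (s, τ))⟫) • g x :=
    (VectorFourier.fourierIntegral_convergent_iff Real.continuous_fourierChar
      (L := innerₗ V) continuous_inner _).mpr hg.integrable
  rw [Real.fourier_eq, Real.fourier_eq, integral_eq_integral_slice e hi]
  refine integral_congr_ae (ae_of_all _ fun t => ?_)
  simp only [sliceFourier, Real.fourier_eq, inner_apply_toLp, neg_add_rev, AddChar.map_add_eq_mul,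
    mul_smul]
  rw [Circle.smul_def, ← integral_smul]
  simp only [RCLike.inner_apply, conj_trivial, mul_comm, Circle.smul_def]

lemma memBernstein_sliceFourier {T : Set V} (hg : SliceDominated e g w) (hT : IsClosed T)
    (hgT : MemBernstein T g) (s : W) :
    MemBernstein {τ | e (toLp 2 (s, τ)) ∈ T} (sliceFourier e g s) := by
  refine memBernstein_of_fourier_eq_zero (hg.continuous_sliceFourier s)
    ⟨∫ y, w y, fun t => (norm_fourier_le_integral_norm _ s).trans ?_⟩
    (hg.integrable_sliceFourier s) fun τ hτ => ?_
  · exact integral_mono (hg.integrable_slice t).norm hg.integrable_bound (hg.norm_le_bound · t)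
  · rw [hg.fourier_sliceFourier]
    exact hgT.fourier_eq_zero hT hg.integrable hτ

lemma sliceFourier_eq_zero {T : Set V} {s : W} (hg : SliceDominated e g w) (hT : IsClosed T)
    (hgT : MemBernstein T g) (hs : ∀ τ, e (toLp 2 (s, τ)) ∉ T) : sliceFourier e g s = 0 := by
  have hzero : 𝓕 (sliceFourier e g s) = 0 := funext fun τ => by
    rw [hg.fourier_sliceFourier, hgT.fourier_eq_zero hT hg.integrable (hs τ), Pi.zero_apply]
  rw [← (hg.continuous_sliceFourier s).fourierInv_fourier_eq (hg.integrable_sliceFourier s)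
    (hzero ▸ integrable_zero _ _ _), hzero]
  ext t
  simp [Real.fourierInv_eq]

lemma sliceFourier_fourier_zero {v : V} (he : e (toLp 2 (0, 1)) = v) {ψ : V → ℂ}
    (hψ : Continuous ψ) (hψi : Integrable ψ) (hψv : Integrable fun τ : ℝ => ψ (τ • v))
    (hg : SliceDominated e (𝓕 ψ) w) :
    sliceFourier e (𝓕 ψ) 0 = 𝓕 fun τ : ℝ => ψ (τ • v) := by
  have hfourier : 𝓕 (sliceFourier e (𝓕 ψ) 0) = fun τ => ψ (-τ • v) := by
    ext τ
    rw [hg.fourier_sliceFourier, apply_toLp_zero, he, neg_smul, ← neg_neg (τ • v),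
      ← Real.fourierInv_eq_fourier_neg, hψ.fourierInv_fourier_eq hψi hg.integrable, neg_neg]
  rw [← (hg.continuous_sliceFourier 0).fourierInv_fourier_eq (hg.integrable_sliceFourier 0)
    (hfourier ▸ hψv.comp_neg), hfourier, Real.fourierInv_eq_fourier_comp_neg]
  simp only [neg_neg]

lemma norm_apply_zero_le {T : Set V} {R B : ℝ} (hg : SliceDominated e g w) (hT : IsClosed T)
    (hTR : ∀ x ∈ T, ‖x‖ ≤ R) (hgT : MemBernstein T g) (hB : ∀ s, ‖sliceFourier e g s 0‖ ≤ B) :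
    ‖g 0‖ ≤ B * volume.real (closedBall (0 : W) R) := by
  have hzero : ∀ s ∉ closedBall (0 : W) R, sliceFourier e g s 0 = 0 := fun s hs =>
    congrFun (hg.sliceFourier_eq_zero hT hgT fun τ hτ => hs <| mem_closedBall_zero_iff.mpr <|
      (norm_le_norm_apply_toLp e s τ).trans (hTR _ hτ)) 0
  have hcont : Continuous fun s => sliceFourier e g s 0 :=
    continuous_fourier_of_integrable (hg.integrable_slice 0)
  have hinv : 𝓕⁻ (fun s => sliceFourier e g s 0) = fun y : W => g (e (toLp 2 (y, 0))) :=
    Continuous.fourierInv_fourier_eq (hg.continuous.comp (by fun_prop)) (hg.integrable_slice 0)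
      (hcont.integrable_of_hasCompactSupport (.intro (isCompact_closedBall 0 R) hzero))
  have hg0 : g 0 = ∫ s in closedBall (0 : W) R, sliceFourier e g s 0 := by
    rw [setIntegral_eq_integral_of_forall_compl_eq_zero hzero, ← map_zero e, ← WithLp.toLp_zero,
      ← Prod.mk_zero_zero, ← congrFun hinv 0, Real.fourierInv_eq]
    simp
  rw [hg0]
  exact norm_setIntegral_le_of_norm_le_const measure_closedBall_lt_top fun s _ => hB s

end SliceDominated

lemma MemBernstein.comp_inner {T : Set ℝ} {F : ℝ → ℂ} (hF : MemBernstein T F) {v : V}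
    (hv : ‖v‖ = 1) : MemBernstein ((· • v) '' T) fun x => F ⟪x, v⟫ := by
  obtain ⟨n, e, he⟩ := exists_linearIsometryEquiv_apply_eq hv
  obtain ⟨hcont, ⟨C, hC⟩, hFT⟩ := hF
  refine ⟨by fun_prop, ⟨C, fun x => hC _⟩, fun ψ hψ hc hs => ?_⟩
  obtain ⟨w, hw⟩ := exists_sliceDominated_schwartzMap e (𝓕 (hc.toSchwartzMap hψ))
  rw [SchwartzMap.fourier_coe] at hw
  have hemb : Topology.IsClosedEmbedding fun τ : ℝ => τ • v :=
    (LinearIsometry.toSpanSingleton ℝ V hv).isometry.isClosedEmbedding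
  have hψv : ContDiff ℝ (⊤ : ℕ∞) fun τ : ℝ => ψ (τ • v) :=
    hψ.comp (contDiff_id.smul contDiff_const)
  have hψc : HasCompactSupport fun τ : ℝ => ψ (τ • v) := hc.comp_isClosedEmbedding hemb
  have hint : Integrable fun x => F ⟪x, v⟫ * 𝓕 ψ x :=
    (integrable_fourier_of_contDiff hψ hc).bdd_mul (by fun_prop) (ae_of_all _ fun x => hC _)
  calc ∫ x, F ⟪x, v⟫ * 𝓕 ψ x = ∫ t, ∫ y, F t * 𝓕 ψ (e (toLp 2 (y, t))) := by
        simp only [integral_eq_integral_slice e hint, inner_eq_snd he]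
    _ = ∫ t, F t * sliceFourier e (𝓕 ψ) 0 t := by
        simp only [integral_const_mul, sliceFourier, Real.fourier_eq, inner_zero_right, neg_zero,
          AddChar.map_zero_eq_one, one_smul]
    _ = ∫ t, F t * 𝓕 (fun τ : ℝ => ψ (τ • v)) t := by
        rw [hw.sliceFourier_fourier_zero he hψ.continuous
          (hψ.continuous.integrable_of_hasCompactSupport hc)
          (hψv.continuous.integrable_of_hasCompactSupport hψc)]
    _ = 0 := hFT _ hψv hψc <| Set.eq_empty_of_forall_notMem fun τ hτ =>
        hs.subset ⟨tsupport_comp_subset_preimage ψ hemb.continuous hτ.1, τ, hτ.2, rfl⟩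

end Slicing

section ParallelHyperplanes

open WithLp (toLp)

variable {Ω : Set V} {v : V} {H : Set ℝ} {a : ℝ}

lemma IsSamplingSet.closedBall_of_segment_subset (h : IsSamplingSet Ω {x | ⟪x, v⟫ ∈ H})
    (hv : ‖v‖ = 1) {c : V} (hc : ∀ τ ∈ closedBall (0 : ℝ) a, c + τ • v ∈ Ω) :
    IsSamplingSet (closedBall 0 a) H := by
  obtain ⟨C, hC, hP⟩ := isSamplingSet_iff.mp h
  refine isSamplingSet_iff.mpr ⟨C, hC, fun F hF b hb hFH t => ?_⟩
  have hf : MemBernstein Ω fun x => 𝐞 ⟪c, x⟫ • F ⟪x, v⟫ := by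
    refine ((hF.comp_inner hv).fourierChar_smul c).mono ?_
    rintro _ ⟨_, ⟨τ, hτ, rfl⟩, rfl⟩
    exact hc τ hτ
  have ht := hP _ hf b hb (fun p hp => (Circle.norm_smul _ _).trans_le (hFH _ hp)) (t • v)
  rwa [Circle.norm_smul, real_inner_smul_left, real_inner_self_eq_norm_sq, hv, one_pow, mul_one]
    at ht

theorem isSamplingSet_inner_mem (hΩ : IsCompact Ω) (hv : ‖v‖ = 1) {ε : ℝ} (hε : 0 < ε)
    (hΩa : ∀ x, ∃ c, ∀ τ : ℝ, x + τ • v ∈ Ω + closedBall 0 ε → τ ∈ closedBall c a)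
    (hH : IsSamplingSet (closedBall 0 a) H) : IsSamplingSet Ω {x | ⟪x, v⟫ ∈ H} := by
  obtain ⟨n, e, he⟩ := exists_linearIsometryEquiv_apply_eq hv
  obtain ⟨k, hk0, -, hk⟩ := exists_localizing_kernel V hε
  obtain ⟨w, hw⟩ := exists_sliceDominated_schwartzMap e k
  obtain ⟨K, hK, hHK⟩ := hH.exists_norm_le_vadd
  have hT : IsCompact (Ω + closedBall 0 ε) := hΩ.add (isCompact_closedBall 0 ε)
  obtain ⟨R, hR⟩ := hT.isBounded.exists_norm_le
  set I := ∫ y, w y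
  have hI : 0 ≤ I := integral_nonneg fun y => (norm_nonneg _).trans (hw.norm_le_bound y 0)
  set A := volume.real (closedBall (0 : EuclideanSpace ℝ (Fin n)) R)
  refine isSamplingSet_iff.mpr ⟨K * I * A + 1, by positivity, fun f hf b hb hP x₀ => ?_⟩
  obtain ⟨M, hM⟩ := hf.2.1
  have hfx := hf.comp_add_right x₀
  have hg := hw.continuous_mul hfx.1 fun x => hM _
  have hgT := hk Ω _ hfx
  set g : V → ℂ := fun x => f (x + x₀) * k x with hgdef
  have hslice : ∀ s, ‖sliceFourier e g s 0‖ ≤ K * (b * I) := fun s => by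
    obtain ⟨c, hc⟩ := hΩa (e (toLp 2 (s, 0)))
    have hG : MemBernstein (c +ᵥ closedBall (0 : ℝ) a)
        fun t => sliceFourier e g s (t + -⟪x₀, v⟫) := by
      refine ((hg.memBernstein_sliceFourier hT.isClosed hgT s).comp_add_right _).mono fun τ hτ => ?_
      rw [vadd_closedBall, vadd_eq_add, add_zero]
      refine hc τ ?_
      rwa [← he, ← apply_toLp_zero, ← map_add, ← WithLp.toLp_add, Prod.mk_add_mk, add_zero,
        zero_add]
    refine (le_of_eq ?_).trans (hHK c _ hG (b * I) (by positivity) (fun h hh => ?_) ⟪x₀, v⟫)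
    · rw [add_neg_cancel]
    · refine hw.norm_sliceFourier_mul_le (f := fun x => f (x + x₀)) (fun y => hP _ ?_) s
      rwa [Set.mem_ofPred_eq, inner_add_left, inner_eq_snd he, neg_add_cancel_right]
  calc ‖f x₀‖ = ‖g 0‖ := by simp only [hgdef, zero_add, hk0, mul_one]
    _ ≤ K * (b * I) * A := hg.norm_apply_zero_le hT.isClosed hR hgT hslice
    _ ≤ (K * I * A + 1) * b := by linarith

end ParallelHyperplanes

section ConvexGeometry

lemma isCompact_sub_self {G : Type*} [AddGroup G] [TopologicalSpace G] [IsTopologicalAddGroup G]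
    {A : Set G} (hA : IsCompact A) : IsCompact (A - A) :=
  sub_eq_add_neg A A ▸ hA.add hA.neg

lemma exists_notMem_add_closedBall_sub {E : Type*} [NormedAddCommGroup E]
    {Ω : Set E} (hΩ : IsCompact Ω) {x : E} (hx : x ∉ Ω - Ω) :
    ∃ ε > 0, x ∉ (Ω + closedBall 0 ε) - (Ω + closedBall 0 ε) := by
  obtain ⟨r, hr, hball⟩ := Metric.isOpen_iff.mp (isCompact_sub_self hΩ).isClosed.isOpen_compl x hx
  refine ⟨r / 3, by positivity, ?_⟩
  rintro ⟨_, ⟨p, hp, b, hb, rfl⟩, _, ⟨q, hq, b', hb', rfl⟩, rfl⟩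
  refine hball ?_ (Set.sub_mem_sub hp hq)
  rw [mem_closedBall_zero_iff] at hb hb'
  rw [mem_ball_iff_norm]
  calc ‖p - q - (p + b - (q + b'))‖ = ‖b' - b‖ := by congr 1; abel
    _ ≤ ‖b'‖ + ‖b‖ := norm_sub_le b' b
    _ < r := by linarith

variable {E : Type*} [NormedAddCommGroup E] [NormedSpace ℝ E]

lemma exists_lt_abs_le_of_smul_notMem_sub {A : Set E} (hA : IsCompact A) (hAc : Convex ℝ A)
    (hAn : A.Nonempty) {v : E} {D : ℝ} (hD : 0 ≤ D) (hDA : D • v ∉ A - A) :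
    ∃ L < D, ∀ τ : ℝ, τ • v ∈ A - A → |τ| ≤ L := by
  set I : Set ℝ := {τ | τ • v ∈ A - A} with hI
  have h0 : (0 : E) ∈ A - A := hAn.zero_mem_sub
  have hlt : ∀ τ ∈ I, τ < D := fun τ hτ => by
    by_contra! hDτ
    refine hDA ?_
    have hmem := (hAc.sub hAc).smul_mem_of_zero_mem h0 hτ
      ⟨div_nonneg hD (hD.trans hDτ), div_le_one_of_le₀ hDτ (hD.trans hDτ)⟩
    rcases (hD.trans hDτ).eq_or_lt with rfl | hτ0
    · rwa [le_antisymm hDτ hD]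
    · rwa [smul_smul, div_mul_cancel₀ _ hτ0.ne'] at hmem
  have hneg : ∀ τ ∈ I, -τ ∈ I := fun τ hτ => by
    rw [hI, Set.mem_ofPred_eq, neg_smul, ← Set.mem_neg, neg_sub]
    exact hτ
  have hcompact : IsCompact I := by
    refine isCompact_Icc.of_isClosed_subset ?_ fun τ hτ =>
      ⟨neg_le.mp (hlt _ (hneg τ hτ)).le, (hlt τ hτ).le⟩
    exact (isCompact_sub_self hA).isClosed.preimage (by fun_prop)
  refine ⟨sSup I, hlt _ (hcompact.sSup_mem ⟨0, by rwa [hI, Set.mem_ofPred_eq, zero_smul]⟩),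
    fun τ hτ => ?_⟩
  exact abs_le'.mpr ⟨le_csSup hcompact.bddAbove hτ, le_csSup hcompact.bddAbove (hneg τ hτ)⟩

lemma exists_subset_closedBall_of_abs_sub_le {T : Set ℝ} {L : ℝ}
    (hT : ∀ x ∈ T, ∀ y ∈ T, |x - y| ≤ L) : ∃ c, T ⊆ closedBall c (L / 2) := by
  rcases T.eq_empty_or_nonempty with rfl | hne
  · exact ⟨0, Set.empty_subset _⟩
  obtain ⟨x₀, hx₀⟩ := hne
  have hbdd : BddBelow T := ⟨x₀ - L, fun y hy => by linarith [abs_le.mp (hT x₀ hx₀ y hy)]⟩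
  refine ⟨sInf T + L / 2, fun x hx => ?_⟩
  have hinf : sInf T ≤ x := csInf_le hbdd hx
  have hsup : x - L ≤ sInf T :=
    le_csInf ⟨x₀, hx₀⟩ fun y hy => by linarith [abs_le.mp (hT x hx y hy)]
  rw [mem_closedBall, Real.dist_eq, abs_le]
  constructor <;> linarith

lemma exists_forall_add_smul_mem_of_smul_mem_sub {Ω : Set E} (hΩ : Convex ℝ Ω) {v : E} {D : ℝ}
    (hDΩ : D • v ∈ Ω - Ω) : ∃ c, ∀ τ ∈ closedBall (0 : ℝ) (D / 2), c + τ • v ∈ Ω := by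
  obtain ⟨p, hp, q, hq, hpq⟩ := hDΩ
  have hpq : p = q + D • v := by rw [← hpq, add_sub_cancel]
  have hline : Convex ℝ {τ : ℝ | q + τ • v ∈ Ω} :=
    (hΩ.translate_preimage_right q).linear_preimage (LinearMap.toSpanSingleton ℝ E v)
  have hIcc : Set.Icc 0 D ⊆ {τ : ℝ | q + τ • v ∈ Ω} :=
    hline.ordConnected.out (by simpa using hq : (0 : ℝ) ∈ _)
      (by simpa [← hpq] using hp : D ∈ _)
  refine ⟨q + (D / 2) • v, fun τ hτ => ?_⟩
  rw [Real.closedBall_eq_Icc] at hτ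
  rw [add_assoc, ← add_smul]
  exact hIcc ⟨by linarith [hτ.1], by linarith [hτ.2]⟩

lemma exists_pos_forall_add_smul_mem {Ω : Set E} (hΩ : (interior Ω).Nonempty) (v : E) :
    ∃ a > 0, ∃ c, ∀ τ ∈ closedBall (0 : ℝ) a, c + τ • v ∈ Ω := by
  obtain ⟨c, hc⟩ := hΩ
  have hnhds : (fun τ : ℝ => c + τ • v) ⁻¹' Ω ∈ nhds 0 := by
    refine ContinuousAt.preimage_mem_nhds (by fun_prop) ?_
    rw [zero_smul, add_zero]
    exact mem_interior_iff_mem_nhds.mp hc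
  obtain ⟨a, ha, hball⟩ := Metric.nhds_basis_closedBall.mem_iff.mp hnhds
  exact ⟨a, ha, c, fun τ hτ => hball hτ⟩

lemma interior_nonempty_of_volume_pos {Ω : Set V} (hΩ : Convex ℝ Ω) (hpos : 0 < volume Ω) :
    (interior Ω).Nonempty := by
  by_contra! h
  refine hpos.ne' (measure_mono_null ?_ (hΩ.addHaar_frontier volume))
  rw [frontier, h, Set.sdiff_empty]
  exact subset_closure

lemma exists_pos_segment_of_smul_mem_sub {Ω : Set V} (hΩ : Convex ℝ Ω) (hpos : 0 < volume Ω)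
    {v : V} {D : ℝ} (hD : 0 ≤ D) (hDΩ : D • v ∈ Ω - Ω) :
    ∃ a > 0, D ≤ 2 * a ∧ ∃ c, ∀ τ ∈ closedBall (0 : ℝ) a, c + τ • v ∈ Ω := by
  rcases hD.eq_or_lt with rfl | hD0
  · obtain ⟨a, ha, hc⟩ :=
      exists_pos_forall_add_smul_mem (interior_nonempty_of_volume_pos hΩ hpos) v
    exact ⟨a, ha, by positivity, hc⟩
  · exact ⟨D / 2, by positivity, by linarith,
      exists_forall_add_smul_mem_of_smul_mem_sub hΩ hDΩ⟩

end ConvexGeometry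

section LowerUniformDensity

variable {Ω : Set V} {v : V} {H : Set ℝ}

lemma lowerUniformDensity_nonneg {E : Type*} [NormedAddCommGroup E] [InnerProductSpace ℝ E]
    [FiniteDimensional ℝ E] [MeasurableSpace E] [BorelSpace E] (Λ : Set E) :
    0 ≤ lowerUniformDensity Λ := by
  rw [lowerUniformDensity, liminf_eq]
  exact Real.sSup_nonneg' ⟨0, Eventually.of_forall fun r =>
    Real.iInf_nonneg fun x => by positivity, le_rfl⟩

theorem isSamplingSet_of_smul_notMem_sub (hΩ : IsCompact Ω) (hconv : Convex ℝ Ω)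
    (hne : Ω.Nonempty) (hv : ‖v‖ = 1) (hH : UniformlyDiscrete H)
    (hD : lowerUniformDensity H • v ∉ Ω - Ω) : IsSamplingSet Ω {x | ⟪x, v⟫ ∈ H} := by
  obtain ⟨ε, hε, hDε⟩ := exists_notMem_add_closedBall_sub hΩ hD
  obtain ⟨L, hLD, hL⟩ := exists_lt_abs_le_of_smul_notMem_sub (hΩ.add (isCompact_closedBall 0 ε))
    (hconv.add (convex_closedBall 0 ε)) (hne.add (nonempty_closedBall.mpr hε.le))
    (lowerUniformDensity_nonneg H) hDε
  have hL0 : 0 ≤ L := (abs_nonneg 0).trans <| hL 0 <| by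
    rw [zero_smul]
    exact (hne.add (nonempty_closedBall.mpr hε.le)).zero_mem_sub
  refine isSamplingSet_inner_mem hΩ hv hε (a := L / 2) (fun x => ?_)
    (isSamplingSet_closedBall_of_lt_lowerUniformDensity (by positivity) hH (by linarith))
  refine exists_subset_closedBall_of_abs_sub_le fun τ hτ τ' hτ' => hL _ ?_
  rw [sub_smul, ← add_sub_add_left_eq_sub _ _ x]
  exact Set.sub_mem_sub hτ hτ'

theorem smul_notMem_sub_of_isSamplingSet (hconv : Convex ℝ Ω) (hpos : 0 < volume Ω)
    (hv : ‖v‖ = 1) (hH : UniformlyDiscrete H) (h : IsSamplingSet Ω {x | ⟪x, v⟫ ∈ H}) :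
    lowerUniformDensity H • v ∉ Ω - Ω := by
  intro hD
  obtain ⟨a, ha, hDa, c, hc⟩ :=
    exists_pos_segment_of_smul_mem_sub hconv hpos (lowerUniformDensity_nonneg H) hD
  exact hDa.not_gt ((h.closedBall_of_segment_subset hv hc).two_mul_lt_lowerUniformDensity ha hH)

lemma setOf_exists_add_smul_eq {E : Type*} [NormedAddCommGroup E] [InnerProductSpace ℝ E] {v : E}
    (hv : ‖v‖ = 1) (H : Set ℝ) :
    {x | ∃ a ∈ H, ∃ y : E, ⟪y, v⟫ = 0 ∧ x = y + a • v} = {x | ⟪x, v⟫ ∈ H} := by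
  have hvv : ⟪v, v⟫ = 1 := by rw [real_inner_self_eq_norm_sq, hv, one_pow]
  ext x
  constructor
  · rintro ⟨a, ha, y, hy, rfl⟩
    rwa [Set.mem_ofPred_eq, inner_add_left, hy, real_inner_smul_left, hvv, mul_one, zero_add]
  · refine fun hx => ⟨⟪x, v⟫, hx, x - ⟪x, v⟫ • v, ?_, (sub_add_cancel _ _).symm⟩
    rw [inner_sub_left, real_inner_smul_left, hvv, mul_one, sub_self]

theorem parallel_lines_sampling_general (hΩ : IsCompact Ω) (hconv : Convex ℝ Ω)
    (hpos : 0 < volume Ω) (hv : ‖v‖ = 1) (hH : UniformlyDiscrete H) :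
    IsSamplingSet Ω {x | ∃ a ∈ H, ∃ y : V, ⟪y, v⟫ = 0 ∧ x = y + a • v} ↔
      lowerUniformDensity H • v ∉ Ω - Ω := by
  rw [setOf_exists_add_smul_eq hv]
  exact ⟨smul_notMem_sub_of_isSamplingSet hconv hpos hv hH,
    isSamplingSet_of_smul_notMem_sub hΩ hconv (nonempty_of_measure_ne_zero hpos.ne') hv hH⟩

end LowerUniformDensity

/-- Theorem 2 (parallel lines): `P = ⋃_{a ∈ H} (l + a·v_l)` is a sampling set for `B_Ω`
iff `D⁻(H)·v_l ∉ Ω − Ω`. -/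
theorem parallel_lines_sampling
    (Ω : Set (EuclideanSpace ℝ (Fin 2))) (hΩcompact : IsCompact Ω) (hΩconvex : Convex ℝ Ω)
    (hΩpos : 0 < volume Ω)
    (v : EuclideanSpace ℝ (Fin 2)) (hv : ‖v‖ = 1)
    (H : Set ℝ) (hH : UniformlyDiscrete H)
    (P : Set (EuclideanSpace ℝ (Fin 2)))
    (hP : P = {x | ∃ a ∈ H, ∃ y : EuclideanSpace ℝ (Fin 2), ⟪y, v⟫ = 0 ∧ x = y + a • v}) :
    IsSamplingSet Ω P ↔ lowerUniformDensity H • v ∉ Ω - Ω := by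
  rw [hP]
  exact parallel_lines_sampling_general hΩcompact hΩconvex hΩpos hv hH
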